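/- arXiv:1512.06209 — 11 statements merged into one kernel-verified Lean document; each statement's English description precedes it below -/
import Mathlib

section
/- Let $k_1,k_2,k_3$ be real constants and let $\phi:(-b_o,b_o)\to\mathbb{R}$ be a $C^2$ function satisfying $\phi(0)=1$ and the ODE $(1+(k_1+k_3)s^2+k_2s^4)\phi''(s)=(k_1+k_2s^2)(\phi(s)-s\phi'(s))$ for all $s\in(-b_o,b_o)$, where $1+(k_1+k_3)s^2+k_2s^4>0$ on $(-b_o,b_o)$. Then for every $s\in(-b_o,b_o)$, $\phi(s)-s\phi'(s)=\exp\big(-\tfrac{1}{2}\int_0^{s^2}\tfrac{k_1+k_2\theta}{1+(k_1+k_3)\theta+k_2\theta^2}\,d\theta\big)$; in particular $\phi(s)-s\phi'(s)>0$. -/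
open Set intervalIntegral

/-- A solution of the linear ODE `u' = -a u` on an open interval around `0` is
`u 0 * exp (-A)`, where `A` is the primitive of `a` vanishing at `0`. -/
theorem eq_mul_exp_neg_of_hasDerivAt {b : ℝ} {u A a : ℝ → ℝ} (hA0 : A 0 = 0)
    (hA : ∀ s ∈ Ioo (-b) b, HasDerivAt A (a s) s)
    (hu : ∀ s ∈ Ioo (-b) b, HasDerivAt u (-(a s * u s)) s) {s : ℝ} (hs : s ∈ Ioo (-b) b) :
    u s = u 0 * Real.exp (-A s) := by
  have hderiv : ∀ t ∈ Ioo (-b) b, HasDerivAt (fun x => u x * Real.exp (A x)) 0 t := by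
    intro t ht
    refine ((hu t ht).mul (hA t ht).exp).congr_deriv ?_
    ring
  have h0 : (0 : ℝ) ∈ Ioo (-b) b := by
    have := hs.1.trans hs.2
    constructor <;> linarith
  have hconst := isOpen_Ioo.is_const_of_deriv_eq_zero isPreconnected_Ioo
    (fun t ht => (hderiv t ht).differentiableAt.differentiableWithinAt)
    (fun t ht => (hderiv t ht).deriv) hs h0
  simp only [hA0, Real.exp_zero, mul_one] at hconst
  rw [← hconst, mul_assoc, ← Real.exp_add, add_neg_cancel, Real.exp_zero, mul_one]

/-- The fundamental theorem of calculus for a quotient of continuous functions whose denominator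
does not vanish on `[0, x]`. -/
theorem hasDerivAt_integral_div {p q : ℝ → ℝ} (hp : Continuous p) (hq : Continuous q) {x : ℝ}
    (hne : ∀ θ ∈ uIcc 0 x, q θ ≠ 0) :
    HasDerivAt (fun y => ∫ θ in (0 : ℝ)..y, p θ / q θ) (p x / q x) x := by
  refine integral_hasDerivAt_right
    (hp.continuousOn.div hq.continuousOn hne).intervalIntegrable ?_
    (hp.continuousAt.div hq.continuousAt (hne x right_mem_uIcc))
  exact (hp.measurable.div hq.measurable).stronglyMeasurable.stronglyMeasurableAtFilter

/-- For a `C²` solution `φ` of the ODE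
`(1+(k₁+k₃)s²+k₂s⁴)φ'' = (k₁+k₂s²)(φ - sφ')` on `(-b₀, b₀)` with `φ(0) = 1`,
one has `φ(s) - sφ'(s) = exp(-(1/2)∫₀^{s²} (k₁+k₂θ)/(1+(k₁+k₃)θ+k₂θ²) dθ) > 0`. -/
theorem stmt_0 (k₁ k₂ k₃ bo : ℝ) (hbo : 0 < bo)
    (φ φ' φ'' : ℝ → ℝ)
    (hφ0 : φ 0 = 1)
    (hd1 : ∀ s ∈ Ioo (-bo) bo, HasDerivAt φ (φ' s) s)
    (hd2 : ∀ s ∈ Ioo (-bo) bo, HasDerivAt φ' (φ'' s) s)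
    (hcont : ContinuousOn φ'' (Ioo (-bo) bo))
    (hpos : ∀ s ∈ Ioo (-bo) bo, 0 < 1 + (k₁ + k₃) * s ^ 2 + k₂ * s ^ 4)
    (hode : ∀ s ∈ Ioo (-bo) bo,
      (1 + (k₁ + k₃) * s ^ 2 + k₂ * s ^ 4) * φ'' s
        = (k₁ + k₂ * s ^ 2) * (φ s - s * φ' s)) :
    ∀ s ∈ Ioo (-bo) bo,
      φ s - s * φ' s
        = Real.exp (-(1 / 2) * ∫ θ in (0:ℝ)..(s ^ 2),
            (k₁ + k₂ * θ) / (1 + (k₁ + k₃) * θ + k₂ * θ ^ 2)) ∧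
      0 < φ s - s * φ' s := by
  have hq : ∀ t ∈ Ioo (-bo) bo, ∀ θ ∈ uIcc 0 (t ^ 2),
      1 + (k₁ + k₃) * θ + k₂ * θ ^ 2 ≠ 0 := by
    intro t ht θ hθ
    rw [uIcc_of_le (sq_nonneg t)] at hθ
    have hlt : √θ < bo :=
      (Real.sqrt_le_iff.2 ⟨abs_nonneg t, by rw [sq_abs]; exact hθ.2⟩).trans_lt (abs_lt.2 ht)
    have h := hpos (√θ) ⟨by linarith [Real.sqrt_nonneg θ], hlt⟩
    rw [show √θ ^ 4 = (√θ ^ 2) ^ 2 by ring, Real.sq_sqrt hθ.1] at h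
    exact h.ne'
  intro s hs
  have key : φ s - s * φ' s
      = Real.exp (-(1 / 2) * ∫ θ in (0:ℝ)..(s ^ 2),
          (k₁ + k₂ * θ) / (1 + (k₁ + k₃) * θ + k₂ * θ ^ 2)) := by
    have h := eq_mul_exp_neg_of_hasDerivAt (b := bo) (u := fun t => φ t - t * φ' t)
      (A := fun t => 1 / 2 * ∫ θ in (0:ℝ)..(t ^ 2),
        (k₁ + k₂ * θ) / (1 + (k₁ + k₃) * θ + k₂ * θ ^ 2))
      (a := fun t => t * ((k₁ + k₂ * t ^ 2) / (1 + (k₁ + k₃) * t ^ 2 + k₂ * t ^ 4)))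
      (by simp) ?_ ?_ hs
    · simpa [hφ0] using h
    · intro t ht
      have hG := hasDerivAt_integral_div (p := fun θ => k₁ + k₂ * θ)
        (q := fun θ => 1 + (k₁ + k₃) * θ + k₂ * θ ^ 2) (by fun_prop) (by fun_prop) (hq t ht)
      have hcomp := HasDerivAt.comp (h := fun y => y ^ 2) t hG (hasDerivAt_pow 2 t)
      refine (hcomp.const_mul (1 / 2)).congr_deriv ?_
      rw [← pow_mul]
      push_cast
      ring
    · intro t ht
      refine ((hd1 t ht).sub ((hasDerivAt_id t).mul (hd2 t ht))).congr_deriv ?_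
      have hφ'' : φ'' t = (k₁ + k₂ * t ^ 2) * (φ t - t * φ' t)
          / (1 + (k₁ + k₃) * t ^ 2 + k₂ * t ^ 4) := by
        rw [eq_div_iff (hpos t ht).ne', mul_comm, hode t ht]
      rw [hφ'']
      simp only [id]
      ring
  exact ⟨key, key ▸ Real.exp_pos _⟩
end

section
/- Let $k_1,k_2,k_3$ be real constants with $k_2\le 0$, and let $b\ge 0$. Then the following are equivalent: (a) for all real $s$ with $|s|\le b$, both $1+k_1b^2+(k_3+k_2b^2)s^2>0$ and $1+(k_1+k_3)s^2+k_2s^4>0$; (b) $1+k_1b^2>0$ and $1+(k_1+k_3)b^2+k_2b^4>0$. -/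
/-- A convex combination of two positive reals is positive. -/
theorem convexCombination_pos {x y θ : ℝ} (hx : 0 < x) (hy : 0 < y) (h0 : 0 ≤ θ) (h1 : θ ≤ 1) :
    0 < (1 - θ) * x + θ * y :=
  convex_Ioi (0 : ℝ) hx hy (sub_nonneg.2 h1) h0 (sub_add_cancel 1 θ)

/-- Proposition 2.1(i): for `k₂ ≤ 0` and `b ≥ 0`, the regularity inequalities
hold for all `|s| ≤ b` iff `1 + k₁b² > 0` and `1 + (k₁+k₃)b² + k₂b⁴ > 0`. -/
theorem stmt_2 (k₁ k₂ k₃ b : ℝ) (hk₂ : k₂ ≤ 0) (hb : 0 ≤ b) :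
    (∀ s : ℝ, |s| ≤ b →
        0 < 1 + k₁ * b ^ 2 + (k₃ + k₂ * b ^ 2) * s ^ 2 ∧
        0 < 1 + (k₁ + k₃) * s ^ 2 + k₂ * s ^ 4)
      ↔ (0 < 1 + k₁ * b ^ 2 ∧ 0 < 1 + (k₁ + k₃) * b ^ 2 + k₂ * b ^ 4) := by
  constructor
  · intro h
    exact ⟨by simpa using (h 0 (by simpa using hb)).1, (h b (abs_of_nonneg hb).le).2⟩
  · rintro ⟨hA, hC⟩ s hs
    have hsb : s ^ 2 ≤ b ^ 2 := sq_le_sq.2 (hs.trans (le_abs_self b))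
    obtain ⟨θ, h0, h1, hθ⟩ : ∃ θ : ℝ, 0 ≤ θ ∧ θ ≤ 1 ∧ s ^ 2 = θ * b ^ 2 := by
      refine ⟨s ^ 2 / b ^ 2, by positivity, div_le_one_of_le₀ hsb (sq_nonneg b), ?_⟩
      rcases eq_or_ne b 0 with rfl | hb0
      · simpa using hsb
      · field_simp
    have hs4 : s ^ 4 = θ ^ 2 * b ^ 4 := by
      linear_combination (s ^ 2 + θ * b ^ 2) * hθ
    have hconcave : 0 ≤ -k₂ * (b ^ 4 * (θ * (1 - θ))) :=
      mul_nonneg (neg_nonneg.2 hk₂)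
        (mul_nonneg (by positivity) (mul_nonneg h0 (sub_nonneg.2 h1)))
    rw [hs4, hθ]
    constructor
    · linarith [convexCombination_pos hA hC h0 h1]
    · linarith [convexCombination_pos one_pos hC h0 h1]
end

section
/- Let $k_1,k_2,k_3$ be real constants with $k_2>0$, and let $b\ge 0$. Then the following are equivalent: (a) for all real $s$ with $|s|\le b$, both $1+k_1b^2+(k_3+k_2b^2)s^2>0$ and $1+(k_1+k_3)s^2+k_2s^4>0$; (b) $1+k_1b^2>0$ and $1+(k_1+k_3)b^2+k_2b^4>0$, and at least one of the following holds: (i) $k_1+k_3\ge0$; (ii) $k_1+k_3+2k_2b^2\le0$ and $1+(k_1+k_3)b^2+k_2b^4>0$; (iii) $k_1+k_3+2k_2b^2>0$ and $4k_2-(k_1+k_3)^2>0$. -/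
/-- An affine function that is positive at the ends of `[0, B]` is positive on `[0, B]`. -/
theorem affine_pos_of_endpoints_pos {a c B t : ℝ} (ha : 0 < a) (hB : 0 < a + c * B)
    (ht : 0 ≤ t) (htB : t ≤ B) : 0 < a + c * t := by
  rcases le_total 0 c with hc | hc
  · positivity
  · linarith [mul_le_mul_of_nonpos_left htB hc]

/-- For `k > 0`, the quadratic `1 + m t + k t²` is positive on `[0, B]` exactly when it is positive
at `B` and its vertex lies to the left of `0`, to the right of `B`, or has positive height. -/
theorem quadratic_pos_on_Icc_iff {m k B : ℝ} (hk : 0 < k) (hB : 0 ≤ B) :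
    (∀ t, 0 ≤ t → t ≤ B → 0 < 1 + m * t + k * t ^ 2) ↔
      0 < 1 + m * B + k * B ^ 2 ∧
        (0 ≤ m ∨ m + 2 * k * B ≤ 0 ∨ (0 < m + 2 * k * B ∧ 0 < 4 * k - m ^ 2)) := by
  constructor
  · intro h
    refine ⟨h B hB le_rfl, ?_⟩
    by_contra! hcon
    obtain ⟨hm, hv, hd⟩ := hcon
    have hpos := h (-m / (2 * k)) (div_nonneg (by linarith) (by linarith))
      ((div_le_iff₀ (by linarith)).2 (by linarith))
    have hval : 4 * k * (1 + m * (-m / (2 * k)) + k * (-m / (2 * k)) ^ 2) = 4 * k - m ^ 2 := by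
      field_simp
      ring
    have hprod := mul_pos (mul_pos four_pos hk) hpos
    linarith [hd hv]
  · rintro ⟨hend, hm | hv | ⟨-, hd⟩⟩ t ht htB
    · positivity
    · have hfac : 0 ≤ (B - t) * -(m + k * (t + B)) :=
        mul_nonneg (by linarith) (by linarith [mul_le_mul_of_nonneg_left htB hk.le])
      linarith
    · refine pos_of_mul_pos_right (a := 4 * k) ?_ (by positivity)
      linarith [sq_nonneg (2 * k * t + m)]

/-- Proposition 2.1(ii): for `k₂ > 0` and `b ≥ 0`, the regularity inequalities
hold for all `|s| ≤ b` iff `b²` lies in the set `S ∩ T` described by the stated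
polynomial conditions. -/
theorem stmt_3 (k₁ k₂ k₃ b : ℝ) (hk₂ : 0 < k₂) (hb : 0 ≤ b) :
    (∀ s : ℝ, |s| ≤ b →
        0 < 1 + k₁ * b ^ 2 + (k₃ + k₂ * b ^ 2) * s ^ 2 ∧
        0 < 1 + (k₁ + k₃) * s ^ 2 + k₂ * s ^ 4)
      ↔ ((0 < 1 + k₁ * b ^ 2 ∧ 0 < 1 + (k₁ + k₃) * b ^ 2 + k₂ * b ^ 4) ∧
          (0 ≤ k₁ + k₃ ∨
           (k₁ + k₃ + 2 * k₂ * b ^ 2 ≤ 0 ∧ 0 < 1 + (k₁ + k₃) * b ^ 2 + k₂ * b ^ 4) ∨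
           (0 < k₁ + k₃ + 2 * k₂ * b ^ 2 ∧ 0 < 4 * k₂ - (k₁ + k₃) ^ 2))) := by
  have hsq (s : ℝ) (hs : |s| ≤ b) : s ^ 2 ≤ b ^ 2 := sq_le_sq.2 (hs.trans (le_abs_self b))
  have hquad := quadratic_pos_on_Icc_iff (m := k₁ + k₃) hk₂ (sq_nonneg b)
  simp only [← pow_mul, Nat.reduceMul] at hquad
  constructor
  · intro h
    have hzero := (h 0 (by simpa using hb)).1
    obtain ⟨hend, hcases⟩ := hquad.1 fun t ht htb => by
      have ht' := (h (√t) (by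
        rw [abs_of_nonneg (Real.sqrt_nonneg t)]
        exact Real.sqrt_le_iff.2 ⟨hb, htb⟩)).2
      rwa [show √t ^ 4 = (√t ^ 2) ^ 2 by ring, Real.sq_sqrt ht] at ht'
    refine ⟨⟨by simpa using hzero, hend⟩, ?_⟩
    tauto
  · rintro ⟨⟨hzero, hend⟩, hcases⟩ s hs
    refine ⟨affine_pos_of_endpoints_pos hzero (by linarith) (sq_nonneg s) (hsq s hs), ?_⟩
    have hs' := hquad.2 ⟨hend, by tauto⟩ (s ^ 2) (sq_nonneg s) (hsq s hs)
    rwa [← pow_mul] at hs'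
end

section
/- Let $k_1,k_2,k_3$ be real constants and let $I\subseteq[0,\infty)$ be an interval on which $f(t):=1+(k_1+k_3)t+k_2t^2>0$. Suppose $u,v,w:I\to\mathbb{R}$ are differentiable with $u>0$, $w\ne0$, $u+vt>0$ on $I$, and satisfy the ODE system $u'=\frac{v-k_1u}{f}$, $v'=\frac{u(k_2u-k_3v-2k_1v)+2v^2}{uf}$, $w'=\frac{w(3v-k_3u-2k_1u)}{2uf}$. Then for every $t\in I$, $\frac{d}{dt}\Big(\frac{w(t)^2\,t}{u(t)+v(t)\,t}\Big)=\frac{w(t)^2}{u(t)\,f(t)}>0$; in particular the function $t\mapsto\frac{w(t)^2 t}{u(t)+v(t)t}$ is strictly increasing on $I$, so for any constant $A$ the equation $\frac{w(B)^2B}{u(B)+v(B)B}=A$ has at most one solution $B\in I$. -/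
open Set

/-- for solutions `(u,v,w)` of the ODE system (3)-(5) of the paper on an
interval `I ⊆ [0,∞)` with `f = 1+(k₁+k₃)t+k₂t² > 0`, `u > 0`, `w ≠ 0`, `u + vt > 0`,
the function `t ↦ w²t/(u+vt)` has derivative `w²/(uf) > 0`, is strictly increasing on `I`,
and for any constant `A` the equation `w(B)²B/(u(B)+v(B)B) = A` has at most one solution. -/
theorem stmt_5 (k₁ k₂ k₃ : ℝ) (I : Set ℝ) (hI : I ⊆ Ici 0) (hI' : I.OrdConnected)
    (u v w : ℝ → ℝ)
    (hf : ∀ t ∈ I, 0 < 1 + (k₁ + k₃) * t + k₂ * t ^ 2)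
    (hu : ∀ t ∈ I, 0 < u t)
    (hw : ∀ t ∈ I, w t ≠ 0)
    (huv : ∀ t ∈ I, 0 < u t + v t * t)
    (hdu : ∀ t ∈ I, HasDerivWithinAt u
      ((v t - k₁ * u t) / (1 + (k₁ + k₃) * t + k₂ * t ^ 2)) I t)
    (hdv : ∀ t ∈ I, HasDerivWithinAt v
      ((u t * (k₂ * u t - k₃ * v t - 2 * k₁ * v t) + 2 * v t ^ 2) /
        (u t * (1 + (k₁ + k₃) * t + k₂ * t ^ 2))) I t)
    (hdw : ∀ t ∈ I, HasDerivWithinAt w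
      (w t * (3 * v t - k₃ * u t - 2 * k₁ * u t) /
        (2 * u t * (1 + (k₁ + k₃) * t + k₂ * t ^ 2))) I t) :
    (∀ t ∈ I,
      HasDerivWithinAt (fun t => w t ^ 2 * t / (u t + v t * t))
        (w t ^ 2 / (u t * (1 + (k₁ + k₃) * t + k₂ * t ^ 2))) I t ∧
      0 < w t ^ 2 / (u t * (1 + (k₁ + k₃) * t + k₂ * t ^ 2))) ∧
    StrictMonoOn (fun t => w t ^ 2 * t / (u t + v t * t)) I ∧
    (∀ A : ℝ, ∀ B₁ ∈ I, ∀ B₂ ∈ I,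
      w B₁ ^ 2 * B₁ / (u B₁ + v B₁ * B₁) = A →
      w B₂ ^ 2 * B₂ / (u B₂ + v B₂ * B₂) = A → B₁ = B₂) := by
  have hderiv : ∀ t ∈ I, HasDerivWithinAt (fun t => w t ^ 2 * t / (u t + v t * t))
      (w t ^ 2 / (u t * (1 + (k₁ + k₃) * t + k₂ * t ^ 2))) I t := by
    intro t ht
    have hft := (hf t ht).ne'
    have hut := (hu t ht).ne'
    have huvt := (huv t ht).ne'
    have hid := hasDerivWithinAt_id t I
    refine ((((hdw t ht).pow 2).mul hid).div
      ((hdu t ht).add ((hdv t ht).mul hid)) huvt).congr_deriv ?_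
    simp only [Pi.pow_apply, Pi.mul_apply, Pi.add_apply, id]
    generalize hF : 1 + (k₁ + k₃) * t + k₂ * t ^ 2 = F at hft ⊢
    field_simp
    subst hF
    push_cast
    ring
  have hpos : ∀ t ∈ I, 0 < w t ^ 2 / (u t * (1 + (k₁ + k₃) * t + k₂ * t ^ 2)) :=
    fun t ht => div_pos (sq_pos_of_ne_zero (hw t ht)) (mul_pos (hu t ht) (hf t ht))
  have hmono : StrictMonoOn (fun t => w t ^ 2 * t / (u t + v t * t)) I :=
    strictMonoOn_of_hasDerivWithinAt_pos hI'.convex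
      (fun t ht => (hderiv t ht).continuousWithinAt)
      (fun t ht => (hderiv t (interior_subset ht)).mono interior_subset)
      (fun t ht => hpos t (interior_subset ht))
  exact ⟨fun t ht => ⟨hderiv t ht, hpos t ht⟩, hmono,
    fun A B₁ h₁ B₂ h₂ e₁ e₂ => hmono.injOn h₁ h₂ (e₁.trans e₂.symm)⟩
end

section
/- Let $k_1,k_2,k_3$ be real constants and let $I\subseteq[0,\infty)$ be an interval containing $0$ on which $f(t):=1+(k_1+k_3)t+k_2t^2>0$. Define $\sigma(t):=\tfrac{1}{2}\int_0^{t}\frac{k_2\theta+k_3}{1+(k_1+k_3)\theta+k_2\theta^2}\,d\theta$, and set $u(t):=e^{2\sigma(t)}$, $v(t):=(k_1+k_3+k_2t)\,u(t)$, $w(t):=\sqrt{f(t)}\,e^{\sigma(t)}$. Then $u,v,w$ satisfy on $I$ the ODE system $u'=\frac{v-k_1u}{f}$, $v'=\frac{u(k_2u-k_3v-2k_1v)+2v^2}{uf}$, $w'=\frac{w(3v-k_3u-2k_1u)}{2uf}$. -/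
open Set

/-- The function `σ(t) = (1/2)∫₀ᵗ (k₂θ+k₃)/(1+(k₁+k₃)θ+k₂θ²) dθ` from (22) of the paper. -/
noncomputable def sigmaFn (k₁ k₂ k₃ t : ℝ) : ℝ :=
  (1 / 2) * ∫ θ in (0:ℝ)..t, (k₂ * θ + k₃) / (1 + (k₁ + k₃) * θ + k₂ * θ ^ 2)

theorem hasDerivAt_sigmaFn {k₁ k₂ k₃ t : ℝ} (ht : 0 ≤ t)
    (hf : ∀ s ∈ Icc 0 t, 0 < 1 + (k₁ + k₃) * s + k₂ * s ^ 2) :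
    HasDerivAt (sigmaFn k₁ k₂ k₃)
      (1 / 2 * ((k₂ * t + k₃) / (1 + (k₁ + k₃) * t + k₂ * t ^ 2))) t := by
  unfold sigmaFn
  refine HasDerivAt.const_mul _ (intervalIntegral.integral_hasDerivAt_right ?_ ?_ ?_)
  · refine ContinuousOn.intervalIntegrable ?_
    rw [uIcc_of_le ht]
    exact ContinuousOn.div (by fun_prop) (by fun_prop) fun s hs => (hf s hs).ne'
  · exact (Measurable.stronglyMeasurable (by fun_prop)).stronglyMeasurableAtFilter
  · exact ContinuousAt.div (by fun_prop) (by fun_prop) (hf t ⟨ht, le_rfl⟩).ne'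

/-- the specific choice `u = e^{2σ}`, `v = (k₁+k₃+k₂t)u`,
`w = √(f) e^{σ}` (formula (22) of the paper) solves the ODE system (3)-(5). -/
theorem stmt_6 (k₁ k₂ k₃ : ℝ) (I : Set ℝ) (hI : I ⊆ Ici 0) (hI' : I.OrdConnected)
    (h0 : (0:ℝ) ∈ I)
    (hf : ∀ t ∈ I, 0 < 1 + (k₁ + k₃) * t + k₂ * t ^ 2)
    (u v w : ℝ → ℝ)
    (hu : u = fun t => Real.exp (2 * sigmaFn k₁ k₂ k₃ t))
    (hv : v = fun t => (k₁ + k₃ + k₂ * t) * u t)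
    (hw : w = fun t => Real.sqrt (1 + (k₁ + k₃) * t + k₂ * t ^ 2) *
      Real.exp (sigmaFn k₁ k₂ k₃ t)) :
    (∀ t ∈ I, HasDerivWithinAt u
      ((v t - k₁ * u t) / (1 + (k₁ + k₃) * t + k₂ * t ^ 2)) I t) ∧
    (∀ t ∈ I, HasDerivWithinAt v
      ((u t * (k₂ * u t - k₃ * v t - 2 * k₁ * v t) + 2 * v t ^ 2) /
        (u t * (1 + (k₁ + k₃) * t + k₂ * t ^ 2))) I t) ∧
    (∀ t ∈ I, HasDerivWithinAt w
      (w t * (3 * v t - k₃ * u t - 2 * k₁ * u t) /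
        (2 * u t * (1 + (k₁ + k₃) * t + k₂ * t ^ 2))) I t) := by
  have hσ : ∀ t ∈ I, HasDerivAt (sigmaFn k₁ k₂ k₃)
      (1 / 2 * ((k₂ * t + k₃) / (1 + (k₁ + k₃) * t + k₂ * t ^ 2))) t := fun t ht =>
    hasDerivAt_sigmaFn (hI ht) fun s hs => hf s (hI'.out h0 ht hs)
  have hu_pos : ∀ t, 0 < u t := fun t => by rw [hu]; exact Real.exp_pos _
  have hu_deriv : ∀ t ∈ I, HasDerivAt u
      ((v t - k₁ * u t) / (1 + (k₁ + k₃) * t + k₂ * t ^ 2)) t := by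
    intro t ht
    rw [hv, hu]
    convert ((hσ t ht).const_mul 2).exp using 1
    ring
  refine ⟨fun t ht => (hu_deriv t ht).hasDerivWithinAt, fun t ht => ?_, fun t ht => ?_⟩
  · have hft := (hf t ht).ne'
    have hut := (hu_pos t).ne'
    have hlin : HasDerivAt (fun s : ℝ => k₁ + k₃ + k₂ * s) k₂ t := by
      simpa using ((hasDerivAt_id t).const_mul k₂).const_add (k₁ + k₃)
    have hmul := hlin.mul (hu_deriv t ht)
    rw [hv] at hmul ⊢
    refine (hmul.congr_deriv ?_).hasDerivWithinAt
    dsimp only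
    field_simp
    ring
  · have hft := hf t ht
    have hut := (hu_pos t).ne'
    have hquad : HasDerivAt (fun s : ℝ => 1 + (k₁ + k₃) * s + k₂ * s ^ 2)
        (k₁ + k₃ + 2 * k₂ * t) t := by
      refine ((((hasDerivAt_id t).const_mul (k₁ + k₃)).const_add 1).add
        ((hasDerivAt_pow 2 t).const_mul k₂)).congr_deriv ?_
      norm_num
      ring
    have hmul := (hquad.sqrt hft.ne').mul (hσ t ht).exp
    rw [hw, hv]
    refine (hmul.congr_deriv ?_).hasDerivWithinAt
    dsimp only
    have hsqrt := Real.sq_sqrt hft.le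
    have hsqrt_ne := (Real.sqrt_pos.mpr hft).ne'
    generalize Real.sqrt (1 + (k₁ + k₃) * t + k₂ * t ^ 2) = r at hsqrt hsqrt_ne ⊢
    rw [← hsqrt]
    field_simp
    ring
end

section
/- Let $\mu>0$ and $\delta\ge0$ be real constants, set $t_o:=\frac{2\delta}{\sqrt{4\delta^2+\mu^2}}$, $\xi:=\delta^2\mu^{-1}+\mu/4$, and let $\widetilde{D}:=\{(s,t)\in\mathbb{R}^2: 0\le t\le t_o,\ |s|\le t\}$ and $\widetilde{R}(s,t):=4\xi\Big(\frac{1-t^2}{1+s}\Big)^3$. Then $\min_{(s,t)\in\widetilde{D}}\widetilde{R}(s,t)=\dfrac{(\sqrt{4\delta^2+\mu^2}-2\delta)^3}{\mu\sqrt{4\delta^2+\mu^2}}$ and $\max_{(s,t)\in\widetilde{D}}\widetilde{R}(s,t)=\dfrac{(\sqrt{4\delta^2+\mu^2}+2\delta)^3}{\mu\sqrt{4\delta^2+\mu^2}}$. -/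
/-- On the region `|s| ≤ t ≤ T < 1`, the quotient `(1 - t²) / (1 + s)` lies in `[1 - T, 1 + T]`. -/
lemma one_sub_sq_div_one_add_mem_Icc {s t T : ℝ} (hT : T < 1) (ht : t ≤ T) (hs : |s| ≤ t) :
    (1 - t ^ 2) / (1 + s) ∈ Set.Icc (1 - T) (1 + T) := by
  obtain ⟨hs₁, hs₂⟩ := abs_le.mp hs
  have hpos : 0 < 1 + s := by linarith
  constructor
  · rw [le_div_iff₀ hpos]
    nlinarith
  · rw [div_le_iff₀ hpos]
    nlinarith

/-- At the corner `s = t` the quotient `(1 - t²) / (1 + s)` equals `1 - t`. -/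
lemma one_sub_sq_div_one_add {t : ℝ} (ht : 1 + t ≠ 0) : (1 - t ^ 2) / (1 + t) = 1 - t := by
  rw [div_eq_iff ht]
  ring

/-- the min and max of
`R̃(s,t) = 4ξ((1-t²)/(1+s))³` on `D̃ = {0 ≤ t ≤ t_o, |s| ≤ t}` with
`t_o = 2δ/√(4δ²+μ²)` and `ξ = δ²/μ + μ/4` are
`(√(4δ²+μ²) ∓ 2δ)³/(μ√(4δ²+μ²))` (formula (13) of Theorem 1.3(iii)). -/
theorem stmt_13 (μ δ : ℝ) (hμ : 0 < μ) (hδ : 0 ≤ δ) :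
    IsLeast
      ((fun p : ℝ × ℝ =>
          4 * (δ ^ 2 * μ⁻¹ + μ / 4) * ((1 - p.2 ^ 2) / (1 + p.1)) ^ 3) ''
        {p : ℝ × ℝ | 0 ≤ p.2 ∧ p.2 ≤ 2 * δ / Real.sqrt (4 * δ ^ 2 + μ ^ 2) ∧
          |p.1| ≤ p.2})
      ((Real.sqrt (4 * δ ^ 2 + μ ^ 2) - 2 * δ) ^ 3 /
        (μ * Real.sqrt (4 * δ ^ 2 + μ ^ 2))) ∧
    IsGreatest
      ((fun p : ℝ × ℝ =>
          4 * (δ ^ 2 * μ⁻¹ + μ / 4) * ((1 - p.2 ^ 2) / (1 + p.1)) ^ 3) ''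
        {p : ℝ × ℝ | 0 ≤ p.2 ∧ p.2 ≤ 2 * δ / Real.sqrt (4 * δ ^ 2 + μ ^ 2) ∧
          |p.1| ≤ p.2})
      ((Real.sqrt (4 * δ ^ 2 + μ ^ 2) + 2 * δ) ^ 3 /
        (μ * Real.sqrt (4 * δ ^ 2 + μ ^ 2))) := by
  set r := Real.sqrt (4 * δ ^ 2 + μ ^ 2)
  have hr_sq : r ^ 2 = 4 * δ ^ 2 + μ ^ 2 := Real.sq_sqrt (by positivity)
  have hr_pos : 0 < r := Real.sqrt_pos.mpr (by positivity)
  have hT_nonneg : 0 ≤ 2 * δ / r := by positivity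
  have hT_lt : 2 * δ / r < 1 := by
    rw [div_lt_one hr_pos]
    nlinarith
  have hξ : 4 * (δ ^ 2 * μ⁻¹ + μ / 4) = r ^ 2 / μ := by
    rw [hr_sq]
    field_simp
  have hmin : (r - 2 * δ) ^ 3 / (μ * r) = r ^ 2 / μ * (1 - 2 * δ / r) ^ 3 := by
    field_simp
  have hmax : (r + 2 * δ) ^ 3 / (μ * r) = r ^ 2 / μ * (1 + 2 * δ / r) ^ 3 := by
    field_simp
  rw [hξ, hmin, hmax]
  generalize 2 * δ / r = T at *
  have hcoef : 0 ≤ r ^ 2 / μ := by positivity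
  refine ⟨⟨⟨(T, T), ⟨hT_nonneg, le_rfl, (abs_of_nonneg hT_nonneg).le⟩, ?_⟩, ?_⟩,
    ⟨⟨(-T, T), ⟨hT_nonneg, le_rfl, ?_⟩, ?_⟩, ?_⟩⟩
  · simp only [one_sub_sq_div_one_add (show 1 + T ≠ 0 by linarith)]
  · rintro _ ⟨⟨s, t⟩, ⟨-, ht, hs⟩, rfl⟩
    have hq := (one_sub_sq_div_one_add_mem_Icc hT_lt ht hs).1
    exact mul_le_mul_of_nonneg_left (pow_le_pow_left₀ (by linarith) hq 3) hcoef
  · simp [abs_of_nonneg hT_nonneg]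
  · have hcorner := one_sub_sq_div_one_add (t := -T) (by linarith)
    rw [neg_sq, sub_neg_eq_add] at hcorner
    simp only [hcorner]
  · rintro _ ⟨⟨s, t⟩, ⟨-, ht, hs⟩, rfl⟩
    have hq := one_sub_sq_div_one_add_mem_Icc hT_lt ht hs
    have hq_nonneg := (sub_nonneg.mpr hT_lt.le).trans hq.1
    exact mul_le_mul_of_nonneg_left (pow_le_pow_left₀ hq_nonneg hq.2 3) hcoef
end

section
/- Let $\mu>0$ and $\delta\ge0$ be real constants, set $t_o:=\frac{2\delta}{\sqrt{4\delta^2+\mu^2}}$, $\xi:=\delta^2\mu^{-1}+\mu/4$, and let $\widetilde{D}:=\{(s,t)\in\mathbb{R}^2: 0\le t\le t_o,\ |s|\le t\}$ and $\widetilde{R}(s,t):=4\xi\Big(\frac{1-t^2}{1+s}\Big)^3$. Then there is a positive constant $\kappa=\dfrac{(\sqrt{4\delta^2+\mu^2}-2\delta)^3}{\mu\sqrt{4\delta^2+\mu^2}}>0$ such that $\widetilde{R}(s,t)\ge\kappa$ for all $(s,t)\in\widetilde{D}$. -/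
/-- Corollary 1.4: the flag-curvature function
`R̃(s,t) = 4ξ((1-t²)/(1+s))³` of the projectively flat square metric admits the positive
lower bound `κ = (√(4δ²+μ²)-2δ)³/(μ√(4δ²+μ²))` on `D̃ = {0 ≤ t ≤ t_o, |s| ≤ t}`. -/
theorem stmt_14 (μ δ : ℝ) (hμ : 0 < μ) (hδ : 0 ≤ δ) :
    0 < (Real.sqrt (4 * δ ^ 2 + μ ^ 2) - 2 * δ) ^ 3 /
        (μ * Real.sqrt (4 * δ ^ 2 + μ ^ 2)) ∧
    ∀ s t : ℝ, 0 ≤ t → t ≤ 2 * δ / Real.sqrt (4 * δ ^ 2 + μ ^ 2) → |s| ≤ t →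
      (Real.sqrt (4 * δ ^ 2 + μ ^ 2) - 2 * δ) ^ 3 /
          (μ * Real.sqrt (4 * δ ^ 2 + μ ^ 2))
        ≤ 4 * (δ ^ 2 * μ⁻¹ + μ / 4) * ((1 - t ^ 2) / (1 + s)) ^ 3 := by
  have hr2 : Real.sqrt (4 * δ ^ 2 + μ ^ 2) ^ 2 = 4 * δ ^ 2 + μ ^ 2 :=
    Real.sq_sqrt (by positivity)
  have hr : 0 < Real.sqrt (4 * δ ^ 2 + μ ^ 2) := Real.sqrt_pos.mpr (by positivity)
  generalize Real.sqrt (4 * δ ^ 2 + μ ^ 2) = r at hr2 hr ⊢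
  have hrδ : 0 < r - 2 * δ := by nlinarith [sq_pos_of_pos hμ]
  refine ⟨by positivity, fun s t ht hto hs => ?_⟩
  have ht1 : 2 * δ / r < 1 := by rw [div_lt_one hr]; linarith
  obtain ⟨hs1, hs2⟩ := abs_le.mp hs
  have hquot : (r - 2 * δ) / r ≤ (1 - t ^ 2) / (1 + s) := by
    have h : (r - 2 * δ) / r = 1 - 2 * δ / r := by field_simp
    rw [h, le_div_iff₀ (by linarith)]
    nlinarith
  have hξ : 4 * (δ ^ 2 * μ⁻¹ + μ / 4) = r ^ 2 / μ := by
    rw [hr2]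
    field_simp
  calc (r - 2 * δ) ^ 3 / (μ * r) = r ^ 2 / μ * ((r - 2 * δ) / r) ^ 3 := by field_simp
    _ ≤ r ^ 2 / μ * ((1 - t ^ 2) / (1 + s)) ^ 3 := by gcongr
    _ = _ := by rw [hξ]
end

section
/- Let $\mu>0$ and $\delta>0$ be real constants, set $t_o:=\frac{2\delta}{\sqrt{4\delta^2+\mu^2}}$, $t_1:=\frac{\sqrt{2}\,\delta}{\sqrt{\mu^2+6\delta^2}}$, $\widetilde{D}:=\{(s,t)\in\mathbb{R}^2:0\le t\le t_o,\ |s|\le t\}$, and define $\widetilde{R}(s,t):=\dfrac{(1-t^2)^2\big[2(\mu^2+4\delta^2)(1-5s^2)t^2+3\mu^2s^4+4(\mu^2+10\delta^2)s^2+\mu^2-8\delta^2\big]}{\mu(1+s^2)^4}$. Then $\min_{(s,t)\in\widetilde{D}}\widetilde{R}(s,t)=\dfrac{\mu^2-8\delta^2}{\mu}=\widetilde{R}(0,0)$ and $\max_{(s,t)\in\widetilde{D}}\widetilde{R}(s,t)=\dfrac{(\mu^2+4\delta^2)^4}{\mu(\mu^2+8\delta^2)^3}=\widetilde{R}(\pm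 t_1,t_1)$. -/
/-- The two-variable flag-curvature function (formula (47) of the paper) of `F₀⁺`. -/
noncomputable def Rplus (μ δ s t : ℝ) : ℝ :=
  ((1 - t ^ 2) ^ 2 *
      (2 * (μ ^ 2 + 4 * δ ^ 2) * (1 - 5 * s ^ 2) * t ^ 2 + 3 * μ ^ 2 * s ^ 4
        + 4 * (μ ^ 2 + 10 * δ ^ 2) * s ^ 2 + μ ^ 2 - 8 * δ ^ 2)) /
    (μ * (1 + s ^ 2) ^ 4)

/-- Normalized upper bound, in the variables `x = s²`, `u = 1 - t²`, `m = μ²/(μ²+4δ²)`. -/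
lemma normalized_upper_bound {m u x : ℝ} (hm : m ≤ 2) (hu : 0 < u) (hx : 0 ≤ x)
    (hux : u ≤ 1 - x) :
    (2 - m) ^ 3 * (u ^ 2 * (3 * m * (1 - x) ^ 2 - 2 * u * (1 - 5 * x))) ≤ (1 + x) ^ 4 := by
  have h1x : 0 < 1 - x := hu.trans_le hux
  obtain ⟨c, hc0, hc1, rfl⟩ : ∃ c : ℝ, 0 ≤ c ∧ c ≤ 1 ∧ u = c ^ 2 * (1 - x) := by
    refine ⟨√(u / (1 - x)), Real.sqrt_nonneg _, ?_, ?_⟩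
    · exact Real.sqrt_le_one.2 ((div_le_one h1x).2 hux)
    · rw [Real.sq_sqrt (by positivity), div_mul_cancel₀ _ h1x.ne']
  have amgm (e P : ℝ) : 4 * e ^ 3 * P - 3 * e ^ 4 ≤ P ^ 4 := by
    have : 0 ≤ (P - e) ^ 2 * ((P + e) ^ 2 + 2 * e ^ 2) := by positivity
    linarith
  have cubic : c * (3 * (1 - x) - c ^ 2 * (1 - 5 * x)) ≤ 2 * (1 + x) := by
    have h0 : 0 ≤ (1 - c) ^ 2 * (c + 2) := by positivity
    have h1 : 0 ≤ x * ((1 - c) * (5 * c ^ 2 + 5 * c + 2)) :=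
      mul_nonneg hx (mul_nonneg (by linarith) (by positivity))
    linarith
  have hq : 0 ≤ 2 - m := by linarith
  have key := mul_le_mul_of_nonneg_left cubic
    (show 0 ≤ 2 * ((2 - m) ^ 3 * c ^ 3 * (1 - x) ^ 3) by positivity)
  have := amgm (c * (1 - x) * (2 - m)) (1 + x)
  linarith

/-- Normalized lower bound, in the variables `x = s²`, `u = 1 - t²`, `m = μ²/(μ²+4δ²)`. -/
lemma normalized_lower_bound {m u x : ℝ} (hmu : m ≤ u) (hu : 0 < u) (hx : 0 ≤ x)
    (hux : u ≤ 1 - x) :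
    (3 * m - 2) * (1 + x) ^ 4 ≤ u ^ 2 * (3 * m * (1 - x) ^ 2 - 2 * u * (1 - 5 * x)) := by
  have slope : (u * (1 - x)) ^ 2 ≤ (1 + x) ^ 4 := by
    have : u * (1 - x) ≤ (1 + x) ^ 2 := by nlinarith
    calc (u * (1 - x)) ^ 2 ≤ ((1 + x) ^ 2) ^ 2 :=
          pow_le_pow_left₀ (mul_nonneg hu.le (by linarith)) this 2
      _ = (1 + x) ^ 4 := by ring
  have endpoint : (3 * u - 2) * (1 + x) ^ 3 ≤ u ^ 3 * (1 + 3 * x) := by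
    obtain ⟨b, rfl⟩ : ∃ b, u = 1 - b := ⟨1 - u, by ring⟩
    have hxb : 0 ≤ b - x := by linarith
    have hb : 0 ≤ b := by linarith
    have mono : (1 + 3 * b) * (1 + x) ^ 3 ≤ (1 + 3 * x) * (1 + b) ^ 3 := by
      have : 0 ≤ (b - x) * (3 * (b + x) + 9 * x * b + (b ^ 2 + b * x + x ^ 2)
          + 3 * x * b * (b + x)) := by positivity
      linarith
    have diag : (1 - 3 * b) * (1 + b) ^ 3 ≤ (1 - b) ^ 3 * (1 + 3 * b) := by
      have : 0 ≤ 16 * b ^ 3 := by positivity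
      linarith
    have h1 := mul_le_mul_of_nonneg_left mono (pow_pos hu 3).le
    have h2 := mul_le_mul_of_nonneg_right diag (show 0 ≤ (1 + x) ^ 3 by positivity)
    refine le_of_mul_le_mul_right ?_ (show 0 < (1 + b) ^ 3 by positivity)
    linarith
  have h1 := mul_le_mul_of_nonneg_left slope (show 0 ≤ 3 * (u - m) by linarith)
  have h2 := mul_le_mul_of_nonneg_right endpoint (show 0 ≤ 1 + x by linarith)
  linarith

lemma Rplus_eq_normalized {μ δ : ℝ} (hμ : 0 < μ) (s t : ℝ) :
    Rplus μ δ s t = (μ ^ 2 + 4 * δ ^ 2) / μ *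
      ((1 - t ^ 2) ^ 2 * (3 * (μ ^ 2 / (μ ^ 2 + 4 * δ ^ 2)) * (1 - s ^ 2) ^ 2
        - 2 * (1 - t ^ 2) * (1 - 5 * s ^ 2)) / (1 + s ^ 2) ^ 4) := by
  have hk : μ ^ 2 + 4 * δ ^ 2 ≠ 0 := by positivity
  have hs : 1 + s ^ 2 ≠ 0 := by positivity
  unfold Rplus
  field_simp
  ring

lemma Rplus_zero_zero (μ δ : ℝ) : Rplus μ δ 0 0 = (μ ^ 2 - 8 * δ ^ 2) / μ := by
  simp [Rplus]

lemma Rplus_neg (μ δ s t : ℝ) : Rplus μ δ (-s) t = Rplus μ δ s t := by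
  simp [Rplus, Even.neg_pow (by decide : Even 4)]

lemma sq_sqrt_two_mul_div (μ : ℝ) {δ : ℝ} (hδ : 0 < δ) :
    (√2 * δ / √(μ ^ 2 + 6 * δ ^ 2)) ^ 2 = 2 * δ ^ 2 / (μ ^ 2 + 6 * δ ^ 2) := by
  rw [div_pow, mul_pow, Real.sq_sqrt (by norm_num), Real.sq_sqrt (by positivity)]

lemma Rplus_maximizer {μ δ : ℝ} (hμ : 0 < μ) (hδ : 0 < δ) :
    Rplus μ δ (√2 * δ / √(μ ^ 2 + 6 * δ ^ 2)) (√2 * δ / √(μ ^ 2 + 6 * δ ^ 2)) =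
      (μ ^ 2 + 4 * δ ^ 2) ^ 4 / (μ * (μ ^ 2 + 8 * δ ^ 2) ^ 3) := by
  have hA : μ ^ 2 + 6 * δ ^ 2 ≠ 0 := by positivity
  have hB : μ ^ 2 + 8 * δ ^ 2 ≠ 0 := by positivity
  have hk : μ ^ 2 + 4 * δ ^ 2 ≠ 0 := by positivity
  rw [Rplus_eq_normalized hμ, sq_sqrt_two_mul_div μ hδ]
  have h1 : 1 + 2 * δ ^ 2 / (μ ^ 2 + 6 * δ ^ 2)
      = (μ ^ 2 + 8 * δ ^ 2) / (μ ^ 2 + 6 * δ ^ 2) := by field_simp; ring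
  have h2 : 1 - 2 * δ ^ 2 / (μ ^ 2 + 6 * δ ^ 2)
      = (μ ^ 2 + 4 * δ ^ 2) / (μ ^ 2 + 6 * δ ^ 2) := by field_simp; ring
  have h3 : 1 - 5 * (2 * δ ^ 2 / (μ ^ 2 + 6 * δ ^ 2))
      = (μ ^ 2 - 4 * δ ^ 2) / (μ ^ 2 + 6 * δ ^ 2) := by field_simp; ring
  rw [h1, h2, h3]
  field_simp
  ring

lemma Rplus_bounds {μ δ s t : ℝ} (hμ : 0 < μ) (ht : 0 ≤ t)
    (hto : t ≤ 2 * δ / √(4 * δ ^ 2 + μ ^ 2)) (hst : |s| ≤ t) :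
    (μ ^ 2 - 8 * δ ^ 2) / μ ≤ Rplus μ δ s t ∧
      Rplus μ δ s t ≤ (μ ^ 2 + 4 * δ ^ 2) ^ 4 / (μ * (μ ^ 2 + 8 * δ ^ 2) ^ 3) := by
  have hk : 0 < μ ^ 2 + 4 * δ ^ 2 := by positivity
  have hB : 0 < μ ^ 2 + 8 * δ ^ 2 := by positivity
  have hst2 : s ^ 2 ≤ t ^ 2 := sq_le_sq.2 (by rwa [abs_of_nonneg ht])
  have hm : μ ^ 2 / (μ ^ 2 + 4 * δ ^ 2) ≤ 1 - t ^ 2 := by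
    have h := pow_le_pow_left₀ ht hto 2
    rw [div_pow, Real.sq_sqrt (by positivity)] at h
    have : μ ^ 2 / (μ ^ 2 + 4 * δ ^ 2) = 1 - (2 * δ) ^ 2 / (4 * δ ^ 2 + μ ^ 2) := by
      rw [add_comm (4 * δ ^ 2)]
      field_simp
      ring
    linarith
  have hm0 : 0 < μ ^ 2 / (μ ^ 2 + 4 * δ ^ 2) := by positivity
  have hu : 0 < 1 - t ^ 2 := hm0.trans_le hm
  have hs4 : 0 < (1 + s ^ 2) ^ 4 := by positivity
  have lower := normalized_lower_bound hm hu (sq_nonneg s) (by linarith)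
  have upper := normalized_upper_bound (m := μ ^ 2 / (μ ^ 2 + 4 * δ ^ 2))
    (by nlinarith [sq_nonneg t]) hu (sq_nonneg s) (by linarith)
  have hq : 2 - μ ^ 2 / (μ ^ 2 + 4 * δ ^ 2)
      = (μ ^ 2 + 8 * δ ^ 2) / (μ ^ 2 + 4 * δ ^ 2) := by
    field_simp
    ring
  rw [Rplus_eq_normalized hμ]
  constructor
  · calc (μ ^ 2 - 8 * δ ^ 2) / μ
        = (μ ^ 2 + 4 * δ ^ 2) / μ * (3 * (μ ^ 2 / (μ ^ 2 + 4 * δ ^ 2)) - 2) := by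
          field_simp
          ring
      _ ≤ _ := mul_le_mul_of_nonneg_left ((le_div_iff₀ hs4).2 lower) (by positivity)
  · calc _ ≤ (μ ^ 2 + 4 * δ ^ 2) / μ * (1 / (2 - μ ^ 2 / (μ ^ 2 + 4 * δ ^ 2)) ^ 3) := by
          refine mul_le_mul_of_nonneg_left ?_ (by positivity)
          have hq3 : 0 < (2 - μ ^ 2 / (μ ^ 2 + 4 * δ ^ 2)) ^ 3 := by
            rw [hq]
            positivity
          rw [div_le_div_iff₀ hs4 hq3]
          linarith
      _ = _ := by
          rw [hq]
          field_simp

/-- on `D̃ = {0 ≤ t ≤ t_o, |s| ≤ t}` with `t_o = 2δ/√(4δ²+μ²)`,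
the min of `R̃` is `(μ²-8δ²)/μ = R̃(0,0)` and the max is
`(μ²+4δ²)⁴/(μ(μ²+8δ²)³) = R̃(±t₁,t₁)` with `t₁ = √2δ/√(μ²+6δ²)`
(formula (14) of Theorem 1.3(iii)). -/
theorem stmt_15 (μ δ : ℝ) (hμ : 0 < μ) (hδ : 0 < δ) :
    IsLeast
      ((fun p : ℝ × ℝ => Rplus μ δ p.1 p.2) ''
        {p : ℝ × ℝ | 0 ≤ p.2 ∧ p.2 ≤ 2 * δ / Real.sqrt (4 * δ ^ 2 + μ ^ 2) ∧
          |p.1| ≤ p.2})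
      ((μ ^ 2 - 8 * δ ^ 2) / μ) ∧
    (μ ^ 2 - 8 * δ ^ 2) / μ = Rplus μ δ 0 0 ∧
    IsGreatest
      ((fun p : ℝ × ℝ => Rplus μ δ p.1 p.2) ''
        {p : ℝ × ℝ | 0 ≤ p.2 ∧ p.2 ≤ 2 * δ / Real.sqrt (4 * δ ^ 2 + μ ^ 2) ∧
          |p.1| ≤ p.2})
      ((μ ^ 2 + 4 * δ ^ 2) ^ 4 / (μ * (μ ^ 2 + 8 * δ ^ 2) ^ 3)) ∧
    (μ ^ 2 + 4 * δ ^ 2) ^ 4 / (μ * (μ ^ 2 + 8 * δ ^ 2) ^ 3)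
      = Rplus μ δ (Real.sqrt 2 * δ / Real.sqrt (μ ^ 2 + 6 * δ ^ 2))
          (Real.sqrt 2 * δ / Real.sqrt (μ ^ 2 + 6 * δ ^ 2)) ∧
    (μ ^ 2 + 4 * δ ^ 2) ^ 4 / (μ * (μ ^ 2 + 8 * δ ^ 2) ^ 3)
      = Rplus μ δ (-(Real.sqrt 2 * δ / Real.sqrt (μ ^ 2 + 6 * δ ^ 2)))
          (Real.sqrt 2 * δ / Real.sqrt (μ ^ 2 + 6 * δ ^ 2)) := by
  have hk : 0 < μ ^ 2 + 6 * δ ^ 2 := by positivity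
  have hto : √2 * δ / √(μ ^ 2 + 6 * δ ^ 2) ≤ 2 * δ / √(4 * δ ^ 2 + μ ^ 2) := by
    refine (pow_le_pow_iff_left₀ (by positivity) (by positivity) two_ne_zero).1 ?_
    rw [sq_sqrt_two_mul_div μ hδ, div_pow, Real.sq_sqrt (by positivity),
      div_le_div_iff₀ hk (by positivity)]
    have : 0 ≤ δ ^ 2 * (2 * μ ^ 2 + 16 * δ ^ 2) := by positivity
    linarith
  refine ⟨⟨⟨(0, 0), ?_, Rplus_zero_zero μ δ⟩, ?_⟩, (Rplus_zero_zero μ δ).symm,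
    ⟨⟨(√2 * δ / √(μ ^ 2 + 6 * δ ^ 2), √2 * δ / √(μ ^ 2 + 6 * δ ^ 2)), ?_,
      Rplus_maximizer hμ hδ⟩, ?_⟩, (Rplus_maximizer hμ hδ).symm, ?_⟩
  · exact ⟨le_rfl, by positivity, by simp⟩
  · rintro _ ⟨p, ⟨h0, h1, h2⟩, rfl⟩
    exact (Rplus_bounds hμ h0 h1 h2).1
  · exact ⟨by positivity, hto, (abs_of_nonneg (by positivity)).le⟩
  · rintro _ ⟨p, ⟨h0, h1, h2⟩, rfl⟩
    exact (Rplus_bounds hμ h0 h1 h2).2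
  · rw [Rplus_neg, Rplus_maximizer hμ hδ]
end

section
/- Let $\mu>0$ and $\delta>0$ be real constants with $\mu^2>12\delta^2$, set $t_o:=\frac{2\delta}{\sqrt{\mu^2-4\delta^2}}$, $t_1:=\frac{\sqrt{2}\,\delta}{\sqrt{\mu^2-6\delta^2}}$, $\widetilde{D}:=\{(s,t)\in\mathbb{R}^2:0\le t\le t_o,\ |s|\le t\}$, and define $\widetilde{R}(s,t):=\dfrac{(1+t^2)^2\big[2(4\delta^2-\mu^2)(1+5s^2)t^2+3\mu^2s^4-4(\mu^2-10\delta^2)s^2+\mu^2+8\delta^2\big]}{\mu(1-s^2)^4}$. Then $\min_{(s,t)\in\widetilde{D}}\widetilde{R}(s,t)=\dfrac{\mu^5(\mu^2-16\delta^2)}{(\mu^2-8\delta^2)^3}=\widetilde{R}(\pm t_o,t_o)$ and $\max_{(s,t)\in\widetilde{D}}\widetilde{R}(s,t)=\dfrac{(\mu^2-4\delta^2)^4}{\mu(\mu^2-8\delta^2)^3}=\widetilde{R}(\pm t_1,t_1)$. (Note that $t_o<1$, so $\widetilde R$ is well defined on $\widetilde D$.) -/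
/-- The two-variable flag-curvature function (formula (49) of the paper) of `F₀⁻`. -/
noncomputable def Rminus (μ δ s t : ℝ) : ℝ :=
  ((1 + t ^ 2) ^ 2 *
      (2 * (4 * δ ^ 2 - μ ^ 2) * (1 + 5 * s ^ 2) * t ^ 2 + 3 * μ ^ 2 * s ^ 4
        - 4 * (μ ^ 2 - 10 * δ ^ 2) * s ^ 2 + μ ^ 2 + 8 * δ ^ 2)) /
    (μ * (1 - s ^ 2) ^ 4)

/-- A quartic bound: the maximum of `v ↦ v³(4r - 3v)` is attained at `v = r`. -/
theorem cube_mul_sub_le_pow_four (r v : ℝ) : v ^ 3 * (4 * r - 3 * v) ≤ r ^ 4 := by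
  have h : 0 ≤ (v - r) ^ 2 * (2 * v ^ 2 + (v + r) ^ 2) := by positivity
  linarith [show r ^ 4 - v ^ 3 * (4 * r - 3 * v) = (v - r) ^ 2 * (2 * v ^ 2 + (v + r) ^ 2) by ring]

/-- Monotonicity of `x ↦ (1 + x)³ / ((1 + 5x)(1 - x)²)` on `[0, 1]`, cleared of denominators. -/
theorem cube_mul_le_cube_mul {x z : ℝ} (hx : 0 ≤ x) (hxz : x ≤ z) (hz : z ≤ 1) :
    (1 + x) ^ 3 * ((1 + 5 * z) * (1 - z) ^ 2) ≤ (1 + z) ^ 3 * ((1 + 5 * x) * (1 - x) ^ 2) := by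
  have hz0 : 0 ≤ z := hx.trans hxz
  have hx1 : x ≤ 1 := hxz.trans hz
  have hxz0 : 0 ≤ x * z := mul_nonneg hx hz0
  have hsq : 0 ≤ z * (1 - z) + x * (1 - x) :=
    add_nonneg (mul_nonneg hz0 (by linarith)) (mul_nonneg hx (by linarith))
  have hprod : x * z ≤ x := by nlinarith
  have hprod' : x * z ≤ z := by nlinarith
  have hrest : 0 ≤ 2 * (z + x) + 8 * (x * z) - 3 * (x * z) * (z + x) - 6 * (x * z) ^ 2 := by
    nlinarith [mul_nonneg hxz0 (sub_nonneg.2 hx1), mul_nonneg hxz0 (sub_nonneg.2 hz),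
      mul_nonneg hxz0 (sub_nonneg.2 (hprod.trans hx1))]
  have h : 0 ≤ 4 * ((z - x) * ((z * (1 - z) + x * (1 - x)) +
      (2 * (z + x) + 8 * (x * z) - 3 * (x * z) * (z + x) - 6 * (x * z) ^ 2))) :=
    mul_nonneg (by norm_num) (mul_nonneg (sub_nonneg.2 hxz) (add_nonneg hsq hrest))
  linarith [show (1 + z) ^ 3 * ((1 + 5 * x) * (1 - x) ^ 2)
    - (1 + x) ^ 3 * ((1 + 5 * z) * (1 - z) ^ 2) = 4 * ((z - x) * ((z * (1 - z) + x * (1 - x)) +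
      (2 * (z + x) + 8 * (x * z) - 3 * (x * z) * (z + x) - 6 * (x * z) ^ 2))) by ring]

/-- The numerator of the normalised curvature is at most its diagonal value when `2q ≤ B`. -/
theorem sq_mul_sub_le_diagonal {p q B : ℝ} (hq : 0 ≤ q) (hqp : q ≤ p) (hB : 2 * q ≤ B) :
    p ^ 2 * (3 * q ^ 2 - B * p) ≤ q ^ 2 * (3 * q ^ 2 - B * q) := by
  have hp : 0 ≤ p := hq.trans hqp
  have h₁ : 0 ≤ (p - q) * ((B - 2 * q) * (q ^ 2 + q * p + p ^ 2)) :=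
    mul_nonneg (by linarith) (mul_nonneg (by linarith) (by positivity))
  have h₂ : 0 ≤ q * ((2 * p + q) * (p - q) ^ 2) := by positivity
  linarith [show q ^ 2 * (3 * q ^ 2 - B * q) - p ^ 2 * (3 * q ^ 2 - B * p)
    = (p - q) * ((B - 2 * q) * (q ^ 2 + q * p + p ^ 2)) + q * ((2 * p + q) * (p - q) ^ 2) by ring]

/-- The cubic `p ↦ p²(3q² - Bp)` is bounded below on `[q, P]` by one of its endpoint values. -/
theorem endpoint_le_sq_mul_sub {p q P B : ℝ} (hq : 0 < q) (hqp : q ≤ p) (hpP : p ≤ P) :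
    q ^ 2 * (3 * q ^ 2 - B * q) ≤ p ^ 2 * (3 * q ^ 2 - B * p) ∨
      P ^ 2 * (3 * q ^ 2 - B * P) ≤ p ^ 2 * (3 * q ^ 2 - B * p) := by
  have hp : 0 < p := hq.trans_le hqp
  have hP : 0 < P := hp.trans_le hpP
  rcases le_total (B * (p ^ 2 + p * q + q ^ 2)) (3 * q ^ 2 * (p + q)) with h | h
  · left
    nlinarith [mul_nonneg (sub_nonneg.2 hqp) (sub_nonneg.2 h)]
  · right
    have hB : 0 < B := by
      by_contra hB
      have : B * (p ^ 2 + p * q + q ^ 2) ≤ 0 :=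
        mul_nonpos_of_nonpos_of_nonneg (not_lt.1 hB) (by positivity)
      have : 0 < 3 * q ^ 2 * (p + q) := by positivity
      linarith
    have hcross : (p ^ 2 + p * q + q ^ 2) * (p + P) ≤ (p ^ 2 + p * P + P ^ 2) * (p + q) := by
      have : 0 ≤ (P - q) * (p * P + p * q + P * q) :=
        mul_nonneg (by linarith) (by positivity)
      linarith [show (p ^ 2 + p * P + P ^ 2) * (p + q) - (p ^ 2 + p * q + q ^ 2) * (p + P)
        = (P - q) * (p * P + p * q + P * q) by ring]
    have hkey : 3 * q ^ 2 * (p + P) ≤ B * (p ^ 2 + p * P + P ^ 2) := by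
      refine le_of_mul_le_mul_right ?_ (show 0 < p + q by positivity)
      nlinarith [mul_le_mul_of_nonneg_right h (show 0 ≤ p + P by positivity),
        mul_le_mul_of_nonneg_left hcross hB.le]
    nlinarith [mul_nonneg (sub_nonneg.2 hpP) (sub_nonneg.2 hkey)]

/-- Upper bound for the normalised curvature numerator. -/
theorem numerator_mul_le {P B x y : ℝ} (hP : 1 ≤ P) (hP' : P < 3 / 2) (hx : 0 ≤ x) (hxy : x ≤ y)
    (hB : B * P = 2 * (1 + 5 * x)) :
    (1 + y) ^ 2 * (3 * (1 + x) ^ 2 - B * (1 + y)) * (P * (2 - P) ^ 3) ≤ (1 - x) ^ 4 := by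
  have hP0 : 0 < P := by linarith
  have hPc : 0 < P * (2 - P) ^ 3 := mul_pos hP0 (pow_pos (by linarith) 3)
  rcases le_total (2 * (1 + x)) B with h | h
  · calc (1 + y) ^ 2 * (3 * (1 + x) ^ 2 - B * (1 + y)) * (P * (2 - P) ^ 3)
        ≤ (1 + x) ^ 2 * (3 * (1 + x) ^ 2 - B * (1 + x)) * (P * (2 - P) ^ 3) :=
          mul_le_mul_of_nonneg_right
            (sq_mul_sub_le_diagonal (by linarith) (by linarith) h) hPc.le
      _ = ((1 + x) * (2 - P)) ^ 3 * (4 * (1 - x) - 3 * ((1 + x) * (2 - P))) := by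
          linear_combination (-(1 + x) ^ 3 * (2 - P) ^ 3) * hB
      _ ≤ (1 - x) ^ 4 := cube_mul_sub_le_pow_four _ _
  · have hBpos : 0 < B := by
      have : 0 < B * P := by rw [hB]; linarith
      exact pos_of_mul_pos_left this hP0.le
    set N := (1 + y) ^ 2 * (3 * (1 + x) ^ 2 - B * (1 + y)) with hN
    have hNB : N * B ^ 2 ≤ 4 * (1 + x) ^ 6 := by
      have : 0 ≤ (B * (1 + y) - 2 * (1 + x) ^ 2) ^ 2 * (B * (1 + y) + (1 + x) ^ 2) :=
        mul_nonneg (sq_nonneg _)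
          (add_nonneg (mul_nonneg hBpos.le (by linarith)) (sq_nonneg _))
      rw [hN]
      linarith [show 4 * (1 + x) ^ 6 - (1 + y) ^ 2 * (3 * (1 + x) ^ 2 - B * (1 + y)) * B ^ 2
        = (B * (1 + y) - 2 * (1 + x) ^ 2) ^ 2 * (B * (1 + y) + (1 + x) ^ 2) by ring]
    have hNx : N * (1 + 5 * x) ^ 2 ≤ (1 + x) ^ 6 * P ^ 2 := by
      have := mul_le_mul_of_nonneg_right hNB (sq_nonneg P)
      have e : N * B ^ 2 * P ^ 2 = 4 * (N * (1 + 5 * x) ^ 2) := by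
        rw [mul_assoc, ← mul_pow, hB]; ring
      linarith
    have h5 : 0 < 5 - P := by linarith
    have hxz : x ≤ (P - 1) / (5 - P) := by
      rw [le_div_iff₀ h5]
      nlinarith [mul_le_mul_of_nonneg_right h hP0.le]
    have hz1 : (P - 1) / (5 - P) ≤ 1 := by
      rw [div_le_one h5]; linarith
    have hg : (1 + x) ^ 3 * (P * (3 - P) ^ 2) ≤ 4 * ((1 + 5 * x) * (1 - x) ^ 2) := by
      have hm := cube_mul_le_cube_mul hx hxz hz1
      have e₁ : (1 + 5 * ((P - 1) / (5 - P))) * (1 - (P - 1) / (5 - P)) ^ 2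
          = 16 * (P * (3 - P) ^ 2) / (5 - P) ^ 3 := by
        field_simp; ring
      have e₂ : (1 + (P - 1) / (5 - P)) ^ 3 = 64 / (5 - P) ^ 3 := by
        field_simp; ring
      rw [e₁, e₂, ← mul_div_assoc, div_mul_eq_mul_div,
        div_le_div_iff_of_pos_right (pow_pos h5 3)] at hm
      linarith
    have hg2 : (1 + x) ^ 6 * P ^ 2 * (3 - P) ^ 4 ≤ 16 * ((1 + 5 * x) ^ 2 * (1 - x) ^ 4) := by
      have := pow_le_pow_left₀ (by positivity) hg 2
      linarith [show ((1 + x) ^ 3 * (P * (3 - P) ^ 2)) ^ 2 = (1 + x) ^ 6 * P ^ 2 * (3 - P) ^ 4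
        by ring, show (4 * ((1 + 5 * x) * (1 - x) ^ 2)) ^ 2
          = 16 * ((1 + 5 * x) ^ 2 * (1 - x) ^ 4) by ring]
    have hP3 : 16 * (P * (2 - P) ^ 3) ≤ (3 - P) ^ 4 := by
      have := cube_mul_sub_le_pow_four (3 - P) (2 * (2 - P))
      linarith [show (2 * (2 - P)) ^ 3 * (4 * (3 - P) - 3 * (2 * (2 - P)))
        = 16 * (P * (2 - P) ^ 3) by ring]
    refine le_of_mul_le_mul_right ?_ (show 0 < 16 * (1 + 5 * x) ^ 2 by positivity)
    calc N * (P * (2 - P) ^ 3) * (16 * (1 + 5 * x) ^ 2)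
        = N * (1 + 5 * x) ^ 2 * (16 * (P * (2 - P) ^ 3)) := by ring
      _ ≤ (1 + x) ^ 6 * P ^ 2 * (16 * (P * (2 - P) ^ 3)) :=
          mul_le_mul_of_nonneg_right hNx (by positivity)
      _ ≤ (1 + x) ^ 6 * P ^ 2 * (3 - P) ^ 4 :=
          mul_le_mul_of_nonneg_left hP3 (by positivity)
      _ ≤ 16 * ((1 + 5 * x) ^ 2 * (1 - x) ^ 4) := hg2
      _ = (1 - x) ^ 4 * (16 * (1 + 5 * x) ^ 2) := by ring

/-- On `[(2 / P - 1) c, c]` the quartic `v ↦ v³(4c - 3Pv)` is minimal at `v = c`. -/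
theorem quartic_le_quartic {P c v : ℝ} (hc : 0 ≤ c) (hvc : v ≤ c) (h : 2 * c ≤ P * (v + c)) :
    (4 - 3 * P) * c ^ 4 ≤ v ^ 3 * (4 * c - 3 * P * v) := by
  have hcv : 0 ≤ c - v := sub_nonneg.2 hvc
  have h₁ : 0 ≤ 3 * ((P * (v + c) - 2 * c) * ((c - v) * (c ^ 2 + v ^ 2))) :=
    mul_nonneg (by norm_num) (mul_nonneg (by linarith) (by positivity))
  have h₂ : 0 ≤ 2 * (c * ((c - v) * (c - v) ^ 2)) := by positivity
  linarith [show v ^ 3 * (4 * c - 3 * P * v) - (4 - 3 * P) * c ^ 4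
    = 3 * ((P * (v + c) - 2 * c) * ((c - v) * (c ^ 2 + v ^ 2)))
      + 2 * (c * ((c - v) * (c - v) ^ 2)) by ring]

/-- Lower bound for the normalised curvature numerator. -/
theorem le_numerator_mul {P B x y : ℝ} (hP : 1 ≤ P) (hP' : P < 3 / 2) (hx : 0 ≤ x) (hxy : x ≤ y)
    (hy : 1 + y ≤ P) (hB : B * P = 2 * (1 + 5 * x)) :
    (4 - 3 * P) * P ^ 2 * (1 - x) ^ 4
      ≤ (1 + y) ^ 2 * (3 * (1 + x) ^ 2 - B * (1 + y)) * (2 - P) ^ 3 := by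
  have hP0 : 0 < P := by linarith
  have hPc : 0 ≤ (2 - P) ^ 3 := pow_nonneg (by linarith) 3
  have hxP : 1 + x ≤ P := by linarith
  have hr : 0 ≤ 1 - x := by linarith
  rcases endpoint_le_sq_mul_sub (B := B) (show 0 < 1 + x by linarith)
    (show 1 + x ≤ 1 + y by linarith) hy with h | h
  · refine le_trans ?_ (mul_le_mul_of_nonneg_right h hPc)
    refine le_of_mul_le_mul_right ?_ hP0
    have e : (1 + x) ^ 2 * (3 * (1 + x) ^ 2 - B * (1 + x)) * (2 - P) ^ 3 * P
        = ((1 + x) * (2 - P)) ^ 3 * (4 * (1 - x) - 3 * ((1 + x) * (2 - P))) := by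
      linear_combination (-(1 + x) ^ 3 * (2 - P) ^ 3) * hB
    have h2 : 0 ≤ 2 - P := by linarith
    have hlow : 2 * (P * (1 - x)) ≤ P * ((1 + x) * (2 - P) + P * (1 - x)) := by
      nlinarith [mul_nonneg hP0.le (mul_nonneg hx h2)]
    have hdiag := quartic_le_quartic (c := P * (1 - x)) (v := (1 + x) * (2 - P))
      (mul_nonneg hP0.le hr) (by nlinarith) hlow
    rw [e]
    refine le_of_mul_le_mul_right ?_ hP0
    linarith
  · refine le_trans ?_ (mul_le_mul_of_nonneg_right h hPc)
    have e : P ^ 2 * (3 * (1 + x) ^ 2 - B * P) = P ^ 2 * ((1 - x) * (1 - 3 * x)) := by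
      rw [hB]; ring
    rw [e]
    have hcub : (4 - 3 * P) * (1 - x) ^ 3 ≤ (1 - 3 * x) * (2 - P) ^ 3 := by
      have h2 : 0 ≤ 2 - P := by linarith
      have h₂ : 0 ≤ 2 * ((1 - x) - (2 - P)) ^ 2 + 3 * ((2 - P) * (1 - x) * ((P - 1) + x)) :=
        add_nonneg (by positivity)
          (mul_nonneg (by norm_num) (mul_nonneg (mul_nonneg h2 hr) (by linarith)))
      have h₃ := mul_nonneg (show 0 ≤ P - 1 - x by linarith) h₂
      linarith [show (1 - 3 * x) * (2 - P) ^ 3 - (4 - 3 * P) * (1 - x) ^ 3 = (P - 1 - x) *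
        (2 * ((1 - x) - (2 - P)) ^ 2 + 3 * ((2 - P) * (1 - x) * ((P - 1) + x))) by ring]
    have := mul_le_mul_of_nonneg_left hcub (show 0 ≤ P ^ 2 * (1 - x) by positivity)
    linarith

theorem Rminus_neg (μ δ s t : ℝ) : Rminus μ δ (-s) t = Rminus μ δ s t := by
  simp only [Rminus, Even.neg_pow (by decide : Even 2), Even.neg_pow (by decide : Even 4)]

/-- `Rminus` in terms of the normalised numerator with `P = μ² / (μ² - 4δ²)`. -/
theorem Rminus_eq_mul_div {μ : ℝ} (hμ : 0 < μ) (δ s t : ℝ) :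
    Rminus μ δ s t = μ * ((1 + t ^ 2) ^ 2 * (3 * (1 + s ^ 2) ^ 2 -
      2 * (1 + 5 * s ^ 2) * ((μ ^ 2 - 4 * δ ^ 2) / μ ^ 2) * (1 + t ^ 2))) / (1 - s ^ 2) ^ 4 := by
  rw [Rminus, ← div_div]
  congr 1
  field_simp
  ring

/-- On the diagonal, `Rminus` is a quartic polynomial in `u = (1 + s²) / (1 - s²)`. -/
theorem Rminus_self {μ δ s u : ℝ} (hs : 1 - s ^ 2 ≠ 0) (hu : 1 + s ^ 2 = u * (1 - s ^ 2)) :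
    Rminus μ δ s s
      = u ^ 3 * (4 * (μ ^ 2 - 4 * δ ^ 2) - 3 * ((μ ^ 2 - 8 * δ ^ 2) * u)) / μ := by
  have hnum : (1 + s ^ 2) ^ 2 *
      (2 * (4 * δ ^ 2 - μ ^ 2) * (1 + 5 * s ^ 2) * s ^ 2 + 3 * μ ^ 2 * s ^ 4
        - 4 * (μ ^ 2 - 10 * δ ^ 2) * s ^ 2 + μ ^ 2 + 8 * δ ^ 2)
      = u ^ 3 * (4 * (μ ^ 2 - 4 * δ ^ 2) - 3 * ((μ ^ 2 - 8 * δ ^ 2) * u)) * (1 - s ^ 2) ^ 4 := by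
    calc _ = (1 + s ^ 2) ^ 3 *
          (4 * (μ ^ 2 - 4 * δ ^ 2) * (1 - s ^ 2) - 3 * ((μ ^ 2 - 8 * δ ^ 2) * (1 + s ^ 2))) := by
          ring
      _ = _ := by rw [hu]; ring
  rw [Rminus, hnum, mul_div_mul_right _ _ (pow_ne_zero 4 hs)]

theorem Rminus_mem_bounds {μ δ s t : ℝ} (hμ : 0 < μ) (hreg : 12 * δ ^ 2 < μ ^ 2)
    (hst : s ^ 2 ≤ t ^ 2) (ht : t ^ 2 ≤ 4 * δ ^ 2 / (μ ^ 2 - 4 * δ ^ 2)) :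
    μ ^ 5 * (μ ^ 2 - 16 * δ ^ 2) / (μ ^ 2 - 8 * δ ^ 2) ^ 3 ≤ Rminus μ δ s t ∧
      Rminus μ δ s t ≤ (μ ^ 2 - 4 * δ ^ 2) ^ 4 / (μ * (μ ^ 2 - 8 * δ ^ 2) ^ 3) := by
  have hδ : 0 ≤ δ ^ 2 := sq_nonneg δ
  have h4 : 0 < μ ^ 2 - 4 * δ ^ 2 := by linarith
  have h8 : 0 < μ ^ 2 - 8 * δ ^ 2 := by linarith
  have h4n := h4.ne'
  have h8n := h8.ne'
  obtain ⟨P, hPdef⟩ : ∃ P, P = μ ^ 2 / (μ ^ 2 - 4 * δ ^ 2) := ⟨_, rfl⟩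
  have hP : 1 ≤ P := by rw [hPdef, le_div_iff₀ h4]; linarith
  have hP' : P < 3 / 2 := by rw [hPdef, div_lt_iff₀ h4]; linarith
  have hy : 1 + t ^ 2 ≤ P := by
    have : 1 + 4 * δ ^ 2 / (μ ^ 2 - 4 * δ ^ 2) = P := by rw [hPdef]; field_simp; ring
    linarith
  have h2P : 2 - P = (μ ^ 2 - 8 * δ ^ 2) / (μ ^ 2 - 4 * δ ^ 2) := by
    rw [hPdef]; field_simp; ring
  have h43P : 4 - 3 * P = (μ ^ 2 - 16 * δ ^ 2) / (μ ^ 2 - 4 * δ ^ 2) := by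
    rw [hPdef]; field_simp; ring
  have hB : 2 * (1 + 5 * s ^ 2) * ((μ ^ 2 - 4 * δ ^ 2) / μ ^ 2) * P = 2 * (1 + 5 * s ^ 2) := by
    rw [hPdef]; field_simp
  have hr : 0 < (1 - s ^ 2) ^ 4 := pow_pos (by linarith) 4
  have hc : 0 < (2 - P) ^ 3 := pow_pos (by linarith) 3
  have hPc : 0 < P * (2 - P) ^ 3 := mul_pos (by linarith) hc
  have hlower := le_numerator_mul hP hP' (sq_nonneg s) hst hy hB
  have hupper := numerator_mul_le hP hP' (sq_nonneg s) hst hB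
  have hmin : μ ^ 5 * (μ ^ 2 - 16 * δ ^ 2) / (μ ^ 2 - 8 * δ ^ 2) ^ 3
      = μ * ((4 - 3 * P) * P ^ 2 / (2 - P) ^ 3) := by
    rw [h2P, h43P, hPdef]
    generalize μ ^ 2 - 4 * δ ^ 2 = A at h4n
    generalize μ ^ 2 - 8 * δ ^ 2 = C at h8n
    field_simp
  have hmax : (μ ^ 2 - 4 * δ ^ 2) ^ 4 / (μ * (μ ^ 2 - 8 * δ ^ 2) ^ 3)
      = μ * (1 / (P * (2 - P) ^ 3)) := by
    rw [h2P, hPdef]; field_simp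
  rw [Rminus_eq_mul_div hμ, mul_div_assoc μ, hmin, hmax]
  constructor
  · refine mul_le_mul_of_nonneg_left ?_ hμ.le
    rwa [div_le_div_iff₀ hc hr]
  · refine mul_le_mul_of_nonneg_left ?_ hμ.le
    rwa [div_le_div_iff₀ hr hPc, one_mul]

/-- for `μ² > 12δ²`, on `D̃ = {0 ≤ t ≤ t_o, |s| ≤ t}` with
`t_o = 2δ/√(μ²-4δ²) < 1`, the min of `R̃` is
`μ⁵(μ²-16δ²)/(μ²-8δ²)³ = R̃(±t_o,t_o)` and the max is
`(μ²-4δ²)⁴/(μ(μ²-8δ²)³) = R̃(±t₁,t₁)` with `t₁ = √2δ/√(μ²-6δ²)`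
(formula (15) of Theorem 1.3(iii)). -/
theorem stmt_16 (μ δ : ℝ) (hμ : 0 < μ) (hδ : 0 < δ)
    (hreg : 12 * δ ^ 2 < μ ^ 2) :
    2 * δ / Real.sqrt (μ ^ 2 - 4 * δ ^ 2) < 1 ∧
    IsLeast
      ((fun p : ℝ × ℝ => Rminus μ δ p.1 p.2) ''
        {p : ℝ × ℝ | 0 ≤ p.2 ∧ p.2 ≤ 2 * δ / Real.sqrt (μ ^ 2 - 4 * δ ^ 2) ∧
          |p.1| ≤ p.2})
      (μ ^ 5 * (μ ^ 2 - 16 * δ ^ 2) / (μ ^ 2 - 8 * δ ^ 2) ^ 3) ∧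
    μ ^ 5 * (μ ^ 2 - 16 * δ ^ 2) / (μ ^ 2 - 8 * δ ^ 2) ^ 3
      = Rminus μ δ (2 * δ / Real.sqrt (μ ^ 2 - 4 * δ ^ 2))
          (2 * δ / Real.sqrt (μ ^ 2 - 4 * δ ^ 2)) ∧
    μ ^ 5 * (μ ^ 2 - 16 * δ ^ 2) / (μ ^ 2 - 8 * δ ^ 2) ^ 3
      = Rminus μ δ (-(2 * δ / Real.sqrt (μ ^ 2 - 4 * δ ^ 2)))
          (2 * δ / Real.sqrt (μ ^ 2 - 4 * δ ^ 2)) ∧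
    IsGreatest
      ((fun p : ℝ × ℝ => Rminus μ δ p.1 p.2) ''
        {p : ℝ × ℝ | 0 ≤ p.2 ∧ p.2 ≤ 2 * δ / Real.sqrt (μ ^ 2 - 4 * δ ^ 2) ∧
          |p.1| ≤ p.2})
      ((μ ^ 2 - 4 * δ ^ 2) ^ 4 / (μ * (μ ^ 2 - 8 * δ ^ 2) ^ 3)) ∧
    (μ ^ 2 - 4 * δ ^ 2) ^ 4 / (μ * (μ ^ 2 - 8 * δ ^ 2) ^ 3)
      = Rminus μ δ (Real.sqrt 2 * δ / Real.sqrt (μ ^ 2 - 6 * δ ^ 2))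
          (Real.sqrt 2 * δ / Real.sqrt (μ ^ 2 - 6 * δ ^ 2)) ∧
    (μ ^ 2 - 4 * δ ^ 2) ^ 4 / (μ * (μ ^ 2 - 8 * δ ^ 2) ^ 3)
      = Rminus μ δ (-(Real.sqrt 2 * δ / Real.sqrt (μ ^ 2 - 6 * δ ^ 2)))
          (Real.sqrt 2 * δ / Real.sqrt (μ ^ 2 - 6 * δ ^ 2)) := by
  have hδ2 : 0 < δ ^ 2 := by positivity
  have hμ2 : 0 < μ ^ 2 := by positivity
  have h4 : 0 < μ ^ 2 - 4 * δ ^ 2 := by linarith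
  have h6 : 0 < μ ^ 2 - 6 * δ ^ 2 := by linarith
  have h8 : 0 < μ ^ 2 - 8 * δ ^ 2 := by linarith
  have hto : (2 * δ / Real.sqrt (μ ^ 2 - 4 * δ ^ 2)) ^ 2 = 4 * δ ^ 2 / (μ ^ 2 - 4 * δ ^ 2) := by
    rw [div_pow, Real.sq_sqrt h4.le]; ring
  have ht1 : (Real.sqrt 2 * δ / Real.sqrt (μ ^ 2 - 6 * δ ^ 2)) ^ 2
      = 2 * δ ^ 2 / (μ ^ 2 - 6 * δ ^ 2) := by
    rw [div_pow, mul_pow, Real.sq_sqrt h6.le, Real.sq_sqrt zero_le_two]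
  have hto0 : 0 ≤ 2 * δ / Real.sqrt (μ ^ 2 - 4 * δ ^ 2) := by positivity
  have ht10 : 0 ≤ Real.sqrt 2 * δ / Real.sqrt (μ ^ 2 - 6 * δ ^ 2) := by positivity
  set a := 2 * δ / Real.sqrt (μ ^ 2 - 4 * δ ^ 2)
  set b := Real.sqrt 2 * δ / Real.sqrt (μ ^ 2 - 6 * δ ^ 2)
  have hba : b ≤ a := by
    refine (sq_le_sq₀ ht10 hto0).1 ?_
    rw [hto, ht1, div_le_div_iff₀ h6 h4]
    nlinarith
  have ha1 : a < 1 := by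
    refine lt_of_pow_lt_pow_left₀ 2 zero_le_one ?_
    rw [hto, one_pow, div_lt_one h4]
    linarith
  have hmin : μ ^ 5 * (μ ^ 2 - 16 * δ ^ 2) / (μ ^ 2 - 8 * δ ^ 2) ^ 3 = Rminus μ δ a a := by
    have hu : 1 + a ^ 2 = μ ^ 2 / (μ ^ 2 - 8 * δ ^ 2) * (1 - a ^ 2) := by
      rw [div_mul_eq_mul_div, eq_div_iff h8.ne']
      linear_combination 2 * (eq_div_iff h4.ne').1 hto
    rw [Rminus_self (by nlinarith) hu, mul_div_cancel₀ _ h8.ne', div_pow,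
      div_mul_eq_mul_div, div_div, div_eq_div_iff (by positivity) (by positivity)]
    ring
  have hmax : (μ ^ 2 - 4 * δ ^ 2) ^ 4 / (μ * (μ ^ 2 - 8 * δ ^ 2) ^ 3) = Rminus μ δ b b := by
    have hu : 1 + b ^ 2 = (μ ^ 2 - 4 * δ ^ 2) / (μ ^ 2 - 8 * δ ^ 2) * (1 - b ^ 2) := by
      rw [div_mul_eq_mul_div, eq_div_iff h8.ne']
      linear_combination 2 * (eq_div_iff h6.ne').1 ht1
    rw [Rminus_self (by nlinarith) hu, mul_div_cancel₀ _ h8.ne', div_pow,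
      div_mul_eq_mul_div, div_div, div_eq_div_iff (by positivity) (by positivity)]
    ring
  have hbounds : ∀ s t : ℝ, 0 ≤ t → t ≤ a → |s| ≤ t →
      μ ^ 5 * (μ ^ 2 - 16 * δ ^ 2) / (μ ^ 2 - 8 * δ ^ 2) ^ 3 ≤ Rminus μ δ s t ∧
      Rminus μ δ s t ≤ (μ ^ 2 - 4 * δ ^ 2) ^ 4 / (μ * (μ ^ 2 - 8 * δ ^ 2) ^ 3) := by
    intro s t ht hta hst
    refine Rminus_mem_bounds hμ hreg (sq_le_sq.2 (by rwa [abs_of_nonneg ht])) ?_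
    rw [← hto]
    exact pow_le_pow_left₀ ht hta 2
  refine ⟨ha1, ⟨⟨(a, a), ⟨hto0, le_rfl, (abs_of_nonneg hto0).le⟩, hmin.symm⟩, ?_⟩, hmin,
    by rw [Rminus_neg, hmin], ⟨⟨(b, b), ⟨ht10, hba, (abs_of_nonneg ht10).le⟩, hmax.symm⟩, ?_⟩,
    hmax, by rw [Rminus_neg, hmax]⟩
  · rintro _ ⟨⟨s, t⟩, ⟨h₀, h₁, h₂⟩, rfl⟩
    exact (hbounds s t h₀ h₁ h₂).1
  · rintro _ ⟨⟨s, t⟩, ⟨h₀, h₁, h₂⟩, rfl⟩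
    exact (hbounds s t h₀ h₁ h₂).2
end

section
/- Let $\mu>0$ and $\delta>0$ be real constants and set $t_o:=\frac{2\delta}{\sqrt{4\delta^2+\mu^2}}$. Define $\varphi(t):=\dfrac{(1-t^2)^3\big[(7\mu^2+40\delta^2)t^2+\mu^2-8\delta^2\big]}{\mu(1+t^2)^4}$ for $0\le t\le t_o$. Then the equation $\varphi'(t)=0$ has exactly one solution in the open interval $(0,t_o)$, namely $t_1=\frac{\sqrt{2}\,\delta}{\sqrt{\mu^2+6\delta^2}}$; in particular $0<t_1<t_o$. -/
open Set

/-- The derivative of `(1-x²)³(Ax²+B)/(μ(1+x²)⁴)`, in factored form. -/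
theorem hasDerivAt_boundary_curvature {μ : ℝ} (hμ : μ ≠ 0) (A B t : ℝ) :
    HasDerivAt (fun x : ℝ => ((1 - x ^ 2) ^ 3 * (A * x ^ 2 + B)) / (μ * (1 + x ^ 2) ^ 4))
      (2 * t * (1 - t ^ 2) ^ 2 * (A - 7 * B - (7 * A - B) * t ^ 2) / (μ * (1 + t ^ 2) ^ 5)) t := by
  have hpos : 1 + t ^ 2 ≠ 0 := by positivity
  have hsq : HasDerivAt (fun x : ℝ => x ^ 2) (2 * t) t := by
    simpa using hasDerivAt_pow 2 t
  have hnum := ((hsq.const_sub 1).fun_pow 3).fun_mul ((hsq.const_mul A).add_const B)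
  have hden := ((hsq.const_add 1).fun_pow 4).const_mul μ
  refine (hnum.fun_div hden (by positivity)).congr_deriv ?_
  field_simp
  ring

/-- for `φ(t) = (1-t²)³[(7μ²+40δ²)t²+μ²-8δ²]/(μ(1+t²)⁴)`,
the equation `φ'(t) = 0` has exactly one solution in `(0, t_o)`, namely
`t₁ = √2δ/√(μ²+6δ²)`, where `t_o = 2δ/√(4δ²+μ²)`; in particular `0 < t₁ < t_o`. -/
theorem stmt_17 (μ δ t_o t₁ : ℝ) (hμ : 0 < μ) (hδ : 0 < δ)
    (hto : t_o = 2 * δ / Real.sqrt (4 * δ ^ 2 + μ ^ 2))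
    (ht₁ : t₁ = Real.sqrt 2 * δ / Real.sqrt (μ ^ 2 + 6 * δ ^ 2)) :
    (0 < t₁ ∧ t₁ < t_o) ∧
    ∀ t ∈ Ioo (0:ℝ) t_o,
      (deriv (fun x : ℝ =>
          ((1 - x ^ 2) ^ 3 * ((7 * μ ^ 2 + 40 * δ ^ 2) * x ^ 2 + μ ^ 2 - 8 * δ ^ 2)) /
            (μ * (1 + x ^ 2) ^ 4)) t = 0 ↔ t = t₁) := by
  have hD : 0 < 4 * δ ^ 2 + μ ^ 2 := by positivity
  have hE : 0 < μ ^ 2 + 6 * δ ^ 2 := by positivity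
  have hto_pos : 0 < t_o := by rw [hto]; positivity
  have ht₁_pos : 0 < t₁ := by rw [ht₁]; positivity
  have hto_sq : t_o ^ 2 = 4 * δ ^ 2 / (4 * δ ^ 2 + μ ^ 2) := by
    rw [hto, div_pow, Real.sq_sqrt hD.le]; ring
  have ht₁_sq : t₁ ^ 2 = 2 * δ ^ 2 / (μ ^ 2 + 6 * δ ^ 2) := by
    rw [ht₁, div_pow, Real.sq_sqrt hE.le, mul_pow, Real.sq_sqrt zero_le_two]
  refine ⟨⟨ht₁_pos, ?_⟩, ?_⟩
  · refine lt_of_pow_lt_pow_left₀ 2 hto_pos.le ?_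
    rw [hto_sq, ht₁_sq, div_lt_div_iff₀ hE hD]
    have h₁ : 0 < δ ^ 2 * μ ^ 2 := by positivity
    have h₂ : 0 < δ ^ 4 := by positivity
    linarith
  · rintro t ⟨ht_pos, ht_lt⟩
    have ht_sq : t ^ 2 < 1 := by
      have hlt : t ^ 2 < t_o ^ 2 := pow_lt_pow_left₀ ht_lt ht_pos.le two_ne_zero
      have hle : t_o ^ 2 ≤ 1 := by
        rw [hto_sq, div_le_one hD]
        linarith [sq_nonneg μ]
      exact hlt.trans_le hle
    have h_one_sub : 0 < 1 - t ^ 2 := by linarith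
    simp only [add_sub_assoc]
    rw [(hasDerivAt_boundary_curvature hμ.ne' _ _ t).deriv,
      ← pow_left_inj₀ ht_pos.le ht₁_pos.le two_ne_zero, ht₁_sq, eq_div_iff hE.ne',
      div_eq_zero_iff, or_iff_left (by positivity),
      mul_eq_zero, or_iff_right (by positivity)]
    constructor <;> intro h <;> linarith
end

section
/- Let $\mu>0$ and $\delta>0$ be real constants and set $t_o:=\frac{2\delta}{\sqrt{4\delta^2+\mu^2}}$. Define $\widetilde{R}(s,t):=\dfrac{(1-t^2)^2\big[2(\mu^2+4\delta^2)(1-5s^2)t^2+3\mu^2s^4+4(\mu^2+10\delta^2)s^2+\mu^2-8\delta^2\big]}{\mu(1+s^2)^4}$. Then at every interior point of $\widetilde{D}:=\{(s,t):0\le t\le t_o,\ |s|\le t\}$, i.e. for every $(s,t)$ with $0<t<t_o$ and $|s|<t$, the gradient $\big(\partial_s\widetilde{R}(s,t),\partial_t\widetilde{R}(s,t)\big)\ne(0,0)$; consequently the maximum and minimum of $\widetilde{R}$ on $\widetilde{D}$ are attained on the boundary of $\widetilde{D}$. -/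
/-- `Rplus` in terms of `k = μ² + 4δ²` and `1 - t²`. -/
theorem Rplus_eq (μ δ s t : ℝ) :
    Rplus μ δ s t = (1 - t ^ 2) ^ 2 *
      (2 * (μ ^ 2 + 4 * δ ^ 2) * (1 - t ^ 2) * (5 * s ^ 2 - 1) + 3 * μ ^ 2 * (1 - s ^ 2) ^ 2) /
        (μ * (1 + s ^ 2) ^ 4) := by
  unfold Rplus
  congr 1
  ring

theorem hasDerivAt_Rplus_fst (μ δ s t : ℝ) (hμ : μ ≠ 0) :
    HasDerivAt (fun x => Rplus μ δ x t)
      (4 * s * (1 - t ^ 2) ^ 2 *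
        ((5 * (μ ^ 2 + 4 * δ ^ 2) * (1 - t ^ 2) - 3 * μ ^ 2 * (1 - s ^ 2)) * (1 + s ^ 2)
          - 2 * (2 * (μ ^ 2 + 4 * δ ^ 2) * (1 - t ^ 2) * (5 * s ^ 2 - 1)
            + 3 * μ ^ 2 * (1 - s ^ 2) ^ 2)) / (μ * (1 + s ^ 2) ^ 5)) s := by
  simp only [Rplus_eq]
  have hs : 1 + s ^ 2 ≠ 0 := by positivity
  have hsq : HasDerivAt (fun x : ℝ => x ^ 2) (2 * s) s := by
    simpa using hasDerivAt_pow 2 s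
  have hnum := ((((hsq.const_mul 5).sub_const 1).const_mul
    (2 * (μ ^ 2 + 4 * δ ^ 2) * (1 - t ^ 2))).add
      (((hsq.const_sub 1).pow 2).const_mul (3 * μ ^ 2))).const_mul ((1 - t ^ 2) ^ 2)
  have hden := ((hsq.const_add 1).pow 4).const_mul μ
  refine (hnum.div hden (mul_ne_zero hμ (pow_ne_zero 4 hs))).congr_deriv ?_
  simp only [Pi.add_apply, Pi.pow_apply]
  field_simp
  push_cast
  ring

theorem hasDerivAt_Rplus_snd (μ δ s t : ℝ) :
    HasDerivAt (fun x => Rplus μ δ s x)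
      (-12 * t * (1 - t ^ 2) * ((μ ^ 2 + 4 * δ ^ 2) * (1 - t ^ 2) * (5 * s ^ 2 - 1)
        + μ ^ 2 * (1 - s ^ 2) ^ 2) / (μ * (1 + s ^ 2) ^ 4)) t := by
  have hsq : HasDerivAt (fun x : ℝ => 1 - x ^ 2) (-(2 * t)) t := by
    simpa using (hasDerivAt_pow 2 t).const_sub 1
  simp only [Rplus_eq]
  have hnum := (hsq.pow 2).mul (((hsq.const_mul (2 * (μ ^ 2 + 4 * δ ^ 2))).mul_const
    (5 * s ^ 2 - 1)).add_const (3 * μ ^ 2 * (1 - s ^ 2) ^ 2))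
  refine (hnum.div_const (μ * (1 + s ^ 2) ^ 4)).congr_deriv ?_
  simp only [Pi.pow_apply]
  push_cast
  ring

/-- The critical point equations have no common solution with `0 < a < 1`, where `a = s²`,
`m = μ²` and `v = (μ² + 4δ²)(1 - t²)`. -/
theorem no_critical_point {m v a : ℝ} (hm : 0 < m) (ha : 0 < a) (ha1 : a < 1)
    (ht : v * (5 * a - 1) + m * (1 - a) ^ 2 = 0)
    (hs : (5 * v - 3 * m * (1 - a)) * (1 + a)
      - 2 * (2 * v * (5 * a - 1) + 3 * m * (1 - a) ^ 2) = 0) : False := by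
  have h : m * (1 - a) * a = 0 := by
    linear_combination (1 / 24) * (1 - 5 * a) * hs
      + (1 / 24) * (9 - 15 * a) * ht
  have : 0 < m * (1 - a) * a := mul_pos (mul_pos hm (by linarith)) ha
  linarith

/-- Inside the domain, `μ² < (μ² + 4δ²)(1 - t²)`. -/
theorem sq_lt_mul_one_sub_sq {μ δ t : ℝ} (hμ : 0 < μ) (ht : 0 < t)
    (hto : t < 2 * δ / Real.sqrt (4 * δ ^ 2 + μ ^ 2)) :
    μ ^ 2 < (μ ^ 2 + 4 * δ ^ 2) * (1 - t ^ 2) := by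
  have hk : 0 < 4 * δ ^ 2 + μ ^ 2 := by positivity
  rw [lt_div_iff₀ (Real.sqrt_pos.2 hk)] at hto
  have h := pow_lt_pow_left₀ hto (by positivity) two_ne_zero
  rw [mul_pow, Real.sq_sqrt hk.le] at h
  linarith

theorem Rplus_gradient_ne_zero {μ δ s t : ℝ} (hμ : 0 < μ) (ht : 0 < t)
    (hto : t < 2 * δ / Real.sqrt (4 * δ ^ 2 + μ ^ 2)) (hst : |s| < t) :
    ¬ (deriv (fun x : ℝ => Rplus μ δ x t) s = 0 ∧
       deriv (fun x : ℝ => Rplus μ δ s x) t = 0) := by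
  rintro ⟨h₁, h₂⟩
  rw [(hasDerivAt_Rplus_fst μ δ s t hμ.ne').deriv] at h₁
  rw [(hasDerivAt_Rplus_snd μ δ s t).deriv] at h₂
  have hv := sq_lt_mul_one_sub_sq hμ ht hto
  have hm : 0 < μ ^ 2 := by positivity
  have hw : 0 < 1 - t ^ 2 := pos_of_mul_pos_right (hm.trans hv) (by positivity)
  have hs1 : s ^ 2 < 1 := by
    have := sq_lt_sq' (neg_lt_of_abs_lt hst) (lt_of_abs_lt hst)
    linarith
  have hcrit : (μ ^ 2 + 4 * δ ^ 2) * (1 - t ^ 2) * (5 * s ^ 2 - 1)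
      + μ ^ 2 * (1 - s ^ 2) ^ 2 = 0 := by
    have hden : μ * (1 + s ^ 2) ^ 4 ≠ 0 := by positivity
    simpa [hden, ht.ne', hw.ne'] using (div_eq_zero_iff.1 h₂).resolve_right hden
  rcases eq_or_ne s 0 with rfl | hs
  · linarith
  · have hden : μ * (1 + s ^ 2) ^ 5 ≠ 0 := by positivity
    have hfac : 4 * s * (1 - t ^ 2) ^ 2 ≠ 0 :=
      mul_ne_zero (mul_ne_zero four_ne_zero hs) (pow_ne_zero 2 hw.ne')
    have h₃ := (mul_eq_zero.1 ((div_eq_zero_iff.1 h₁).resolve_right hden)).resolve_left hfac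
    exact no_critical_point hm (by positivity) hs1 hcrit (by linear_combination h₃)

/-- step (a1) of Case (B) of Theorem 1.3(iii): at every interior point
of `D̃ = {0 ≤ t ≤ t_o, |s| ≤ t}` (with `t_o = 2δ/√(4δ²+μ²)`) the gradient of `R̃` is
nonzero; consequently any max or min of `R̃` on `D̃` is attained on the boundary
`{|s| = t} ∪ {t = t_o}`. -/
theorem stmt_19 (μ δ t_o : ℝ) (hμ : 0 < μ) (hδ : 0 < δ)
    (hto : t_o = 2 * δ / Real.sqrt (4 * δ ^ 2 + μ ^ 2)) :
    (∀ s t : ℝ, 0 < t → t < t_o → |s| < t →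
      ¬ (deriv (fun x : ℝ => Rplus μ δ x t) s = 0 ∧
         deriv (fun x : ℝ => Rplus μ δ s x) t = 0)) ∧
    (∀ p : ℝ × ℝ,
      p ∈ {q : ℝ × ℝ | 0 ≤ q.2 ∧ q.2 ≤ t_o ∧ |q.1| ≤ q.2} →
      (IsMaxOn (fun q : ℝ × ℝ => Rplus μ δ q.1 q.2)
          {q : ℝ × ℝ | 0 ≤ q.2 ∧ q.2 ≤ t_o ∧ |q.1| ≤ q.2} p ∨
       IsMinOn (fun q : ℝ × ℝ => Rplus μ δ q.1 q.2)
          {q : ℝ × ℝ | 0 ≤ q.2 ∧ q.2 ≤ t_o ∧ |q.1| ≤ q.2} p) →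
      (|p.1| = p.2 ∨ p.2 = t_o)) := by
  refine ⟨fun s t ht htt hst => Rplus_gradient_ne_zero hμ ht (hto ▸ htt) hst, ?_⟩
  rintro ⟨s, t⟩ ⟨-, htt, hst⟩ hext
  by_contra! hne
  simp only at htt hst hne
  have hst' : |s| < t := lt_of_le_of_ne hst hne.1
  have htt' : t < t_o := lt_of_le_of_ne htt hne.2
  have hnhds : {q : ℝ × ℝ | 0 ≤ q.2 ∧ q.2 ≤ t_o ∧ |q.1| ≤ q.2} ∈ nhds (s, t) := by
    have hopen : IsOpen {q : ℝ × ℝ | |q.1| < q.2 ∧ q.2 < t_o} :=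
      (isOpen_lt continuous_fst.abs continuous_snd).inter
        (isOpen_lt continuous_snd continuous_const)
    filter_upwards [hopen.mem_nhds ⟨hst', htt'⟩] with q hq
    exact ⟨(abs_nonneg _).trans hq.1.le, hq.2.le, hq.1.le⟩
  have hloc : IsLocalExtr (fun q : ℝ × ℝ => Rplus μ δ q.1 q.2) (s, t) :=
    hext.elim (fun h => Or.inr (h.isLocalMax hnhds)) (fun h => Or.inl (h.isLocalMin hnhds))
  have hfst : IsLocalExtr (fun x => Rplus μ δ x t) s :=
    IsExtrFilter.comp_tendsto (g := fun x : ℝ => (x, t)) hloc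
      (Continuous.tendsto (by fun_prop) s)
  have hsnd : IsLocalExtr (fun x => Rplus μ δ s x) t :=
    IsExtrFilter.comp_tendsto (g := fun x : ℝ => (s, x)) hloc
      (Continuous.tendsto (by fun_prop) t)
  exact Rplus_gradient_ne_zero hμ ((abs_nonneg s).trans_lt hst') (hto ▸ htt') hst'
    ⟨hfst.deriv_eq_zero, hsnd.deriv_eq_zero⟩
end
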